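/- If k = k(n) and p = p(n) > 0 are sequences satisfying k = ω(log n) and n/k ≥ p·C(n−1, k−1) = ω(log³ n), then there exists a constant C > 0 such that with high probability (probability tending to 1 as n → ∞) the cop number of the random hypergraph G^k(n,p) satisfies c(G^k(n,p)) ≤ C · √(n/k) · log n. -/

import Mathlib

open scoped BigOperators

/-- A `k`-uniform hypergraph on vertex set `Fin n`. -/
structure KGraph (n k : ℕ) where
  edges : Finset (Finset (Fin n))
  uniform : ∀ e ∈ edges, e.card = k

namespace KGraph

variable {n k : ℕ}

/-- A loose path of edges from `x` to `y`: a nonempty list of edges, the first containing `x`,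
the last containing `y`, with consecutive edges intersecting. -/
def IsLoosePath (G : KGraph n k) (x y : Fin n) (l : List (Finset (Fin n))) : Prop :=
  l ≠ [] ∧ (∀ e ∈ l, e ∈ G.edges) ∧ (∀ e ∈ l.head?, x ∈ e) ∧
    (∀ e ∈ l.getLast?, y ∈ e) ∧ l.Chain' (fun e f => (e ∩ f).Nonempty)

/-- Distance between two vertices: the smallest length of a loose path between them
(`0` if they are equal, `⊤` if there is no such path). -/
noncomputable def dist (G : KGraph n k) (x y : Fin n) : ℕ∞ :=
  if x = y then 0
  else sInf ((fun l : List (Finset (Fin n)) => (l.length : ℕ∞)) '' {l | G.IsLoosePath x y l})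

/-- Distance between two sets of vertices: the minimum over pairs. -/
noncomputable def setDist (G : KGraph n k) (A B : Set (Fin n)) : ℕ∞ :=
  ⨅ (x ∈ A) (y ∈ B), G.dist x y

/-- The closed `r`-th vertex-neighbourhood of a set of vertices. -/
noncomputable def vNhd (G : KGraph n k) (A : Set (Fin n)) (r : ℕ) : Set (Fin n) :=
  {v | G.setDist A {v} ≤ (r : ℕ∞)}

/-- The set of vertices covered by a set of edges. -/
def VB (B : Set (Finset (Fin n))) : Set (Fin n) :=
  ⋃ e ∈ B, (e : Set (Fin n))

/-- The closed `r`-th vertex-neighbourhood of a set of edges. -/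
noncomputable def vNhdE (G : KGraph n k) (B : Set (Finset (Fin n))) (r : ℕ) : Set (Fin n) :=
  G.vNhd (VB B) r

/-- The closed `r`-th edge-neighbourhood of a set of vertices: edges within distance `r - 1`. -/
noncomputable def eNhd (G : KGraph n k) (A : Set (Fin n)) (r : ℕ) : Set (Finset (Fin n)) :=
  {e | e ∈ G.edges ∧ G.setDist (e : Set (Fin n)) A ≤ ((r - 1 : ℕ) : ℕ∞)}

/-- The average vertex degree of `G`. -/
noncomputable def avgDeg (G : KGraph n k) : ℝ :=
  (∑ v : Fin n, ((G.vNhd {v} 1).ncard : ℝ)) / n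

/-- A `k`-graph on `n` vertices with average vertex degree `d ≥ k` is `ξ`-expanding if
(A.1) edge-neighbourhoods of vertices are not too large, (A.2) vertex-neighbourhoods of vertex
sets have size comparable to `|A| d^r`, and (A.3) vertex-neighbourhoods of edge sets are large. -/
def IsExpanding (G : KGraph n k) (ξ : ℝ) : Prop :=
  (k : ℝ) ≤ G.avgDeg ∧
  (∀ v : Fin n, ∀ r : ℕ, 1 ≤ r → G.avgDeg ^ r ≤ Real.sqrt ((n : ℝ) * k) →
    ((G.eNhd {v} r).ncard : ℝ) ≤ ξ⁻¹ * G.avgDeg ^ r / k) ∧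
  (∀ A : Set (Fin n), ∀ r : ℕ, 1 ≤ r →
    ξ * min ((A.ncard : ℝ) * G.avgDeg ^ r) (n : ℝ) ≤ ((G.vNhd A r).ncard : ℝ) ∧
    ((G.vNhd A r).ncard : ℝ) ≤ ξ⁻¹ * (A.ncard : ℝ) * G.avgDeg ^ r) ∧
  (∀ B : Set (Finset (Fin n)), B ⊆ (G.edges : Set (Finset (Fin n))) → ∀ r : ℕ, 1 ≤ r →
    ξ * min ((B.ncard : ℝ) * k * G.avgDeg ^ r) (n : ℝ) ≤ ((G.vNhdE B r).ncard : ℝ))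

/-- `CopsWin G c r` : with the cops currently on the vertices `c i`, the robber on `r`, and the
cops to move, the cops have a strategy to catch the robber. Either a cop is already on the
robber's vertex; or the cops can move (each by distance at most 1) so that a cop lands on the
robber; or the cops can move so that whatever the robber's reply, the cops still win. -/
inductive CopsWin (G : KGraph n k) {m : ℕ} : (Fin m → Fin n) → Fin n → Prop
  | caught (c : Fin m → Fin n) (r : Fin n) (i : Fin m) (h : c i = r) : CopsWin G c r
  | stepCaught (c c' : Fin m → Fin n) (r : Fin n)
      (hmove : ∀ i, G.dist (c i) (c' i) ≤ 1) (i : Fin m) (h : c' i = r) : CopsWin G c r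
  | step (c c' : Fin m → Fin n) (r : Fin n)
      (hmove : ∀ i, G.dist (c i) (c' i) ≤ 1)
      (h : ∀ r' : Fin n, G.dist r r' ≤ 1 → CopsWin G c' r') : CopsWin G c r

/-- The cop number of `G` : the least `m` such that `m` cops can be initially placed so as to
catch the robber wherever he starts. -/
noncomputable def copNumber (G : KGraph n k) : ℕ :=
  sInf {m : ℕ | ∃ c₀ : Fin m → Fin n, ∀ r₀ : Fin n, CopsWin G c₀ r₀}

/-- `G` is connected if all pairs of vertices are at finite distance. -/
def Connected (G : KGraph n k) : Prop := ∀ x y : Fin n, G.dist x y ≠ ⊤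

end KGraph

open Classical in
/-- The probability that the binomial random `k`-uniform hypergraph `G^k(n,p)` (each `k`-subset
of `[n]` an edge independently with probability `p`) satisfies the property `Q`. -/
noncomputable def ghProb (n k : ℕ) (p : ℝ) (Q : KGraph n k → Prop) : ℝ :=
  ∑ E ∈ (Finset.powersetCard k (Finset.univ : Finset (Fin n))).powerset,
    if h : ∀ e ∈ E, e.card = k then
      (if Q ⟨E, h⟩ then
        p ^ E.card * (1 - p) ^ ((Finset.powersetCard k (Finset.univ : Finset (Fin n))).card - E.card)
      else 0)
    else 0

/-!
Put `Q = √(n / k)`. The `O(Q log n)` cops start at independent uniformly random vertices. If `r` is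
chosen so that about `Q` vertices (or edges) lie within distance `r` of the robber, then the cops
can afford to guard all of them: every set `B` of these targets has a ball of order
`min(|B| k Q, n)` around it, so by a Chernoff bound and a union bound over `B` that ball contains at
least `|B|` cops, and the marriage theorem assigns to each target its own cop, who guards it before
the robber arrives. Balls grow this fast because neighbourhoods of small sets are as large as
conceivable up to a factor `1 - O(1 / log n)`, which is lost at most `log n` times.

With high probability `G^k(n,p)` expands this well: a small neighbourhood of `A` is missed by many
sets of size about `n / (k log n)`, while each given one is missed with small probability, and the
failure probability is summable over all `A`.
-/

open Finset

/-! ### Neighbourhoods and distance -/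

section Neighbourhoods

variable {α : Type*} [DecidableEq α] {E : Finset (Finset α)} {A : Finset α} {x y : α} {r : ℕ}

/-- The edges of the hypergraph with edge set `E` that meet the vertex set `A`. -/
def incidentEdges (E : Finset (Finset α)) (A : Finset α) : Finset (Finset α) :=
  {e ∈ E | ¬Disjoint e A}

/-- The closed neighbourhood of the vertex set `A` in the hypergraph with edge set `E`. The set
of vertices at distance at most `r` from `A` is the iterate `(closedNbhd E)^[r] A`. -/
def closedNbhd (E : Finset (Finset α)) (A : Finset α) : Finset α :=
  A ∪ (incidentEdges E A).biUnion id

lemma subset_closedNbhd (E : Finset (Finset α)) (A : Finset α) : A ⊆ closedNbhd E A :=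
  subset_union_left

lemma mem_closedNbhd_singleton :
    y ∈ closedNbhd E {x} ↔ x = y ∨ ∃ e ∈ E, x ∈ e ∧ y ∈ e := by
  simp [closedNbhd, incidentEdges, eq_comm, and_assoc]

lemma mem_closedNbhd_singleton_comm : y ∈ closedNbhd E {x} ↔ x ∈ closedNbhd E {y} := by
  simp only [mem_closedNbhd_singleton, eq_comm, and_comm]

lemma subset_closedNbhd_singleton {e : Finset α} (he : e ∈ E) (hx : x ∈ e) :
    e ⊆ closedNbhd E {x} :=
  fun _ hy => mem_closedNbhd_singleton.2 (.inr ⟨e, he, hx, hy⟩)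

lemma mem_closedNbhd : y ∈ closedNbhd E A ↔ ∃ x ∈ A, y ∈ closedNbhd E {x} := by
  simp only [closedNbhd, incidentEdges, mem_union, mem_biUnion, mem_filter, id,
    Finset.not_disjoint_iff]
  grind

lemma closedNbhd_mono : Monotone (closedNbhd E) := by
  intro A B hAB y hy
  obtain ⟨x, hx, hxy⟩ := mem_closedNbhd.1 hy
  exact mem_closedNbhd.2 ⟨x, hAB hx, hxy⟩

lemma subset_iterate_closedNbhd (r : ℕ) (A : Finset α) : A ⊆ (closedNbhd E)^[r] A :=
  Function.id_le_iterate_of_id_le (subset_closedNbhd E) r A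

lemma mem_iterate_closedNbhd :
    y ∈ (closedNbhd E)^[r] A ↔ ∃ x ∈ A, y ∈ (closedNbhd E)^[r] {x} := by
  induction r generalizing y with
  | zero => simp
  | succ r ih =>
    simp only [Function.iterate_succ_apply', mem_closedNbhd (A := (closedNbhd E)^[r] _)]
    grind

lemma iterate_closedNbhd_biUnion {ι : Type*} (J : Finset ι) (F : ι → Finset α) :
    (closedNbhd E)^[r] (J.biUnion F) = J.biUnion fun j => (closedNbhd E)^[r] (F j) := by
  ext y
  simp only [mem_iterate_closedNbhd (A := J.biUnion F), mem_biUnion]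
  constructor
  · rintro ⟨x, ⟨j, hj, hx⟩, hxy⟩
    exact ⟨j, hj, mem_iterate_closedNbhd.2 ⟨x, hx, hxy⟩⟩
  · rintro ⟨j, hj, hy⟩
    obtain ⟨x, hx, hxy⟩ := mem_iterate_closedNbhd.1 hy
    exact ⟨x, ⟨j, hj, hx⟩, hxy⟩

lemma mem_iterate_closedNbhd_singleton_comm :
    y ∈ (closedNbhd E)^[r] {x} ↔ x ∈ (closedNbhd E)^[r] {y} := by
  induction r generalizing x y with
  | zero => simp [eq_comm]
  | succ r ih =>
    rw [Function.iterate_succ_apply', Function.iterate_succ_apply, mem_closedNbhd,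
      mem_iterate_closedNbhd]
    exact exists_congr fun z => by rw [ih, mem_closedNbhd_singleton_comm, and_comm]

end Neighbourhoods

namespace KGraph

variable {n k : ℕ} {G : KGraph n k}

lemma two_le_length_of_isLoosePath {x y : Fin n} {l : List (Finset (Fin n))}
    (hl : G.IsLoosePath x y l) (hxy : ∀ e ∈ G.edges, x ∈ e → y ∉ e) : 2 ≤ l.length := by
  obtain ⟨hne, hmem, hx, hy, -⟩ := hl
  match l, hne with
  | [e], _ => exact absurd (hy e rfl) (hxy e (hmem e (by simp)) (hx e rfl))
  | _ :: _ :: _, _ => simp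

lemma dist_le_one_iff {x y : Fin n} : G.dist x y ≤ 1 ↔ y ∈ closedNbhd G.edges {x} := by
  rw [mem_closedNbhd_singleton, KGraph.dist]
  split_ifs with hxy
  · simp [hxy]
  simp only [hxy, false_or]
  constructor
  · intro h
    by_contra! hne
    refine absurd (le_trans (le_sInf ?_) h) (by decide : ¬ (2 : ℕ∞) ≤ 1)
    rintro _ ⟨l, hl, rfl⟩
    exact Nat.ofNat_le_cast.2 (two_le_length_of_isLoosePath hl hne)
  · rintro ⟨e, he, hx, hy⟩
    exact sInf_le ⟨[e], ⟨by simp, by simpa using he, by simpa using hx, by simpa using hy,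
      List.isChain_singleton _⟩, by simp⟩

end KGraph

/-! ### Winning strategies of the cops -/

namespace KGraph

variable {n k m : ℕ} {G : KGraph n k}

lemma copsWin_of_forall_mem_iterate {c t : Fin m → Fin n} {v : Fin n} {r : ℕ}
    (hct : ∀ i, t i ∈ (closedNbhd G.edges)^[r] {c i})
    (hwin : ∀ u ∈ (closedNbhd G.edges)^[r] {v}, G.CopsWin t u) : G.CopsWin c v := by
  induction r generalizing c v with
  | zero =>
    obtain rfl : t = c := funext fun i => by simpa using hct i
    exact hwin v (by simp)
  | succ r ih =>
    have hstep : ∀ i, ∃ z ∈ closedNbhd G.edges {c i}, t i ∈ (closedNbhd G.edges)^[r] {z} :=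
      fun i => mem_iterate_closedNbhd.1 (hct i)
    choose c' hc' hc't using hstep
    refine .step c c' v (fun i => dist_le_one_iff.2 (hc' i)) fun v' hv' => ih hc't fun u hu => ?_
    refine hwin u ?_
    rw [Function.iterate_succ_apply]
    exact mem_iterate_closedNbhd.2 ⟨v', dist_le_one_iff.1 hv', hu⟩

lemma copsWin_of_mem_closedNbhd {c : Fin m → Fin n} {v : Fin n} {i : Fin m}
    (h : v ∈ closedNbhd G.edges {c i}) : G.CopsWin c v := by
  refine .stepCaught c (Function.update c i v) v (fun j => dist_le_one_iff.2 ?_) i (by simp)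
  rcases eq_or_ne j i with rfl | hj
  · simpa using h
  · simpa [Function.update_of_ne hj] using subset_closedNbhd G.edges {c j}

lemma copsWin_of_injective_assignment {ι : Type*} {c : Fin m → Fin n} {v : Fin n} {r : ℕ}
    {J : Finset ι} {F : ι → Finset (Fin n)}
    (hF : ∀ u ∈ (closedNbhd G.edges)^[r] {v}, ∃ j ∈ J, F j ⊆ closedNbhd G.edges {u})
    {f : J → Fin m} (hf : Function.Injective f)
    (hc : ∀ j : J, c (f j) ∈ (closedNbhd G.edges)^[r] (F j)) : G.CopsWin c v := by
  have htarget : ∀ i, ∃ z ∈ (closedNbhd G.edges)^[r] {c i}, ∀ j : J, f j = i → z ∈ F j := by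
    intro i
    by_cases hi : ∃ j, f j = i
    · obtain ⟨j, rfl⟩ := hi
      obtain ⟨x, hx, hcx⟩ := mem_iterate_closedNbhd.1 (hc j)
      exact ⟨x, mem_iterate_closedNbhd_singleton_comm.1 hcx, fun j' hj' => hf hj' ▸ hx⟩
    · exact ⟨c i, subset_iterate_closedNbhd r _ (mem_singleton_self _),
        fun j hj => absurd ⟨j, hj⟩ hi⟩
  choose t hct htF using htarget
  refine copsWin_of_forall_mem_iterate hct fun u hu => ?_
  obtain ⟨j, hj, hju⟩ := hF u hu
  exact copsWin_of_mem_closedNbhd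
    (mem_closedNbhd_singleton_comm.1 (hju (htF (f ⟨j, hj⟩) ⟨j, hj⟩ rfl)))

lemma copNumber_le_of_forall_copsWin {c : Fin m → Fin n} (h : ∀ v, G.CopsWin c v) :
    G.copNumber ≤ m :=
  Nat.sInf_le ⟨c, h⟩

end KGraph

/-! ### Random placements and systems of representatives -/

lemma sum_pow_card_nonempty_le {α : Type*} (T : Finset α) {y : ℝ} (hy : 0 ≤ y)
    (hT : y * #T ≤ 1) : ∑ B ∈ T.powerset with B.Nonempty, y ^ #B ≤ 2 * (y * #T) := by
  classical
  have hsplit : 1 + ∑ B ∈ T.powerset with B.Nonempty, y ^ #B = (y + 1) ^ #T := by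
    have hempty : {B ∈ T.powerset | ¬B.Nonempty} = {∅} := by ext; aesop
    rw [← sum_pow_mul_eq_add_pow, ← sum_filter_add_sum_filter_not T.powerset Finset.Nonempty,
      hempty]
    simp [add_comm]
  have hexp : (y + 1) ^ #T ≤ Real.exp (y * #T) := by
    rw [mul_comm y, Real.exp_nat_mul]
    gcongr
    exact Real.add_one_le_exp y
  have hT0 : 0 ≤ y * #T := by positivity
  have hquad := (abs_le.1 (Real.abs_exp_sub_one_sub_id_le
    (x := y * #T) (by rwa [abs_of_nonneg hT0]))).2
  nlinarith

section Placement

variable {U V κ ι : Type*} [Fintype V] [DecidableEq V] [Fintype κ]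

lemma sum_pow_card_filter_mem [DecidableEq κ] (S : Finset V) (t : ℝ) :
    ∑ c : κ → V, t ^ #{i | c i ∈ S} =
      (#S * t + (Fintype.card V - #S)) ^ Fintype.card κ := by
  have hsum : ∑ a : V, (if a ∈ S then t else 1) = #S * t + (Fintype.card V - #S) := by
    rw [sum_ite]
    simp [filter_not, ← compl_eq_univ_sdiff, card_compl, Nat.cast_sub (card_le_univ S)]
  have hprod (c : κ → V) : ∏ i, (if c i ∈ S then t else 1) = t ^ #{i | c i ∈ S} := by
    rw [prod_ite]
    simp
  have hpow := Fintype.prod_sum fun (_ : κ) (a : V) => if a ∈ S then t else 1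
  simpa only [hsum, hprod, prod_const, card_univ] using hpow.symm

/- Markov's inequality for `2⁻¹ ^ X`, where `X` counts the coordinates of a uniformly random
placement that lie in `S`. -/
lemma card_filter_card_lt_le [Nonempty V] [DecidableEq κ] (S : Finset V) (b : ℕ) :
    (#{c : κ → V | #{i | c i ∈ S} < b} : ℝ) ≤ Fintype.card V ^ Fintype.card κ *
      (2 ^ b * Real.exp (-(Fintype.card κ * #S / (2 * Fintype.card V)))) := by
  have hN : (0 : ℝ) < Fintype.card V := mod_cast Fintype.card_pos
  have hS : (#S : ℝ) ≤ Fintype.card V := mod_cast card_le_univ S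
  set N : ℝ := (Fintype.card V : ℝ)
  set K := Fintype.card κ
  have hmarkov : (#{c : κ → V | #{i | c i ∈ S} < b} : ℝ) * 2⁻¹ ^ b ≤
      (#S * 2⁻¹ + (N - #S)) ^ K := by
    rw [← sum_pow_card_filter_mem, ← nsmul_eq_mul, ← sum_const]
    refine sum_le_sum_of_subset_of_nonneg (filter_subset _ _) (fun _ _ _ => by positivity)
      |>.trans' (sum_le_sum fun c hc => ?_)
    exact pow_le_pow_of_le_one (by norm_num) (by norm_num) (mem_filter.1 hc).2.le
  have hbase : #S * 2⁻¹ + (N - #S) ≤ N * Real.exp (-(#S / (2 * N))) := by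
    calc #S * 2⁻¹ + (N - #S) = N * (-(#S / (2 * N)) + 1) := by field_simp; ring
      _ ≤ _ := by gcongr; exact Real.add_one_le_exp _
  have hpow : (N * Real.exp (-(#S / (2 * N)))) ^ K =
      N ^ K * Real.exp (-(K * #S / (2 * N))) := by
    rw [mul_pow, ← Real.exp_nat_mul]; ring_nf
  rw [inv_pow, mul_inv_le_iff₀ (by positivity)] at hmarkov
  calc _ ≤ (#S * 2⁻¹ + (N - #S)) ^ K * 2 ^ b := hmarkov
    _ ≤ (N * Real.exp (-(#S / (2 * N)))) ^ K * 2 ^ b := by gcongr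
    _ = _ := by rw [hpow]; ring

lemma sum_card_filter_card_hits_lt_le [Nonempty V] [DecidableEq κ] {T : Finset ι}
    {R : ι → Finset V} {x : ℝ}
    (hR : ∀ B ⊆ T, B.Nonempty →
      x * #B ≤ Fintype.card κ * #(B.biUnion R) / Fintype.card V)
    (hT : 2 * Real.exp (-(x / 2)) * #T ≤ 1) :
    ∑ B ∈ T.powerset with B.Nonempty,
      (#{c : κ → V | #{i | c i ∈ B.biUnion R} < #B} : ℝ) ≤
      Fintype.card V ^ Fintype.card κ * (4 * Real.exp (-(x / 2)) * #T) := by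
  set y := 2 * Real.exp (-(x / 2)) with hy
  have hterm : ∀ B ∈ {B ∈ T.powerset | B.Nonempty},
      (#{c : κ → V | #{i | c i ∈ B.biUnion R} < #B} : ℝ) ≤
        Fintype.card V ^ Fintype.card κ * y ^ #B := by
    intro B hB
    obtain ⟨hBT, hne⟩ := mem_filter.1 hB
    refine (card_filter_card_lt_le _ _).trans ?_
    rw [hy, mul_pow, ← Real.exp_nat_mul, mul_comm 2 (_ : ℝ), ← div_div]
    gcongr
    linarith [hR B (mem_powerset.1 hBT) hne]
  refine (sum_le_sum hterm).trans ?_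
  rw [← mul_sum]
  gcongr
  exact (sum_pow_card_nonempty_le T (by positivity) hT).trans_eq (by rw [hy]; ring)

variable [Fintype U] {J : U → Finset ι} {R : ι → Finset V} {x : ℝ}

lemma exists_forall_card_le_card_hits [Nonempty V]
    (hR : ∀ u, ∀ B ⊆ J u, B.Nonempty →
      x * #B ≤ Fintype.card κ * #(B.biUnion R) / Fintype.card V)
    (hJ : ∑ u, 4 * Real.exp (-(x / 2)) * #(J u) < 1) :
    ∃ c : κ → V, ∀ u, ∀ B ⊆ J u, #B ≤ #{i | c i ∈ B.biUnion R} := by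
  classical
  have hterm : ∀ u, 2 * Real.exp (-(x / 2)) * #(J u) ≤ 1 := fun u => by
    have := single_le_sum (f := fun u => 4 * Real.exp (-(x / 2)) * #(J u))
      (fun _ _ => by positivity) (mem_univ u)
    have : 0 ≤ 2 * Real.exp (-(x / 2)) * #(J u) := by positivity
    linarith
  let failing (B : Finset ι) : Finset (κ → V) := {c | #{i | c i ∈ B.biUnion R} < #B}
  let allFailing := univ.biUnion fun u => {B ∈ (J u).powerset | B.Nonempty}.biUnion failing
  have hunion : #allFailing ≤ ∑ u, ∑ B ∈ (J u).powerset with B.Nonempty, #(failing B) :=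
    card_biUnion_le.trans (sum_le_sum fun u _ => card_biUnion_le)
  have hlt : (#allFailing : ℝ) < #(univ : Finset (κ → V)) := by
    calc (#allFailing : ℝ)
        ≤ ∑ u, ∑ B ∈ (J u).powerset with B.Nonempty, (#(failing B) : ℝ) :=
          mod_cast hunion
      _ ≤ ∑ u, Fintype.card V ^ Fintype.card κ * (4 * Real.exp (-(x / 2)) * #(J u)) :=
          sum_le_sum fun u _ => sum_card_filter_card_hits_lt_le (hR u) (hterm u)
      _ < Fintype.card V ^ Fintype.card κ * 1 := by rw [← mul_sum]; gcongr
      _ = _ := by simp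
  obtain ⟨c, -, hc⟩ := exists_mem_notMem_of_card_lt_card (Nat.cast_lt.1 hlt)
  refine ⟨c, fun u B hB => ?_⟩
  rcases B.eq_empty_or_nonempty with rfl | hne
  · simp
  · by_contra! hlt
    exact hc (mem_biUnion.2 ⟨u, mem_univ u, mem_biUnion.2
      ⟨B, mem_filter.2 ⟨mem_powerset.2 hB, hne⟩, mem_filter.2 ⟨mem_univ c, hlt⟩⟩⟩)

lemma exists_forall_injective_assignment [Nonempty V]
    (hR : ∀ u, ∀ B ⊆ J u, B.Nonempty →
      x * #B ≤ Fintype.card κ * #(B.biUnion R) / Fintype.card V)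
    (hJ : ∑ u, 4 * Real.exp (-(x / 2)) * #(J u) < 1) :
    ∃ c : κ → V, ∀ u, ∃ f : J u → κ, Function.Injective f ∧ ∀ j : J u, c (f j) ∈ R j := by
  classical
  obtain ⟨c, hc⟩ := exists_forall_card_le_card_hits hR hJ
  refine ⟨c, fun u => ?_⟩
  have hhall (s : Finset (J u)) : #s ≤ #(s.biUnion fun j => {i | c i ∈ R j}) := by
    calc #s = #(s.map (.subtype _)) := (card_map _).symm
      _ ≤ #{i | c i ∈ (s.map (.subtype _)).biUnion R} := hc u _ (map_subtype_subset s)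
      _ = _ := by congr 1; ext i; simp
  obtain ⟨f, hf, hcf⟩ := (all_card_le_biUnion_card_iff_exists_injective _).1 hhall
  exact ⟨f, hf, fun j => by simpa using hcf j⟩

end Placement

/-! ### Expansion -/

lemma half_mul_min_card_mul_le {α β : Type*} {f : Finset α → Finset β} (hf : Monotone f)
    {A : Finset α} (hA : A.Nonempty) {c x N : ℝ} (hc : 0 ≤ c) (hx : 0 < x) (hxN : x ≤ N)
    (h : ∀ B ⊆ A, B.Nonempty → #B * x ≤ N → c * (#B * x) ≤ #(f B)) :
    c / 2 * min (#A * x) N ≤ #(f A) := by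
  by_cases hAN : #A * x ≤ N
  · rw [min_eq_left hAN]
    exact (mul_le_mul_of_nonneg_right (half_le_self hc) (by positivity)).trans
      (h A Subset.rfl hA hAN)
  push Not at hAN
  have hone : 1 ≤ ⌊N / x⌋₊ := Nat.one_le_floor_iff _ |>.2 ((one_le_div hx).2 hxN)
  obtain ⟨B, hBA, hB⟩ : ∃ B ⊆ A, #B = ⌊N / x⌋₊ :=
    exists_subset_card_eq (Nat.floor_le_of_le ((div_le_iff₀ hx).2 hAN.le))
  have hBN : #B * x ≤ N := by
    rw [hB, ← le_div_iff₀ hx]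
    exact Nat.floor_le (div_nonneg (hx.le.trans hxN) hx.le)
  have hNB : N ≤ 2 * (#B * x) := by
    have hone' : (1 : ℝ) ≤ ⌊N / x⌋₊ := mod_cast hone
    have := (div_lt_iff₀ hx).1 (Nat.lt_floor_add_one (N / x))
    rw [hB]
    nlinarith
  calc c / 2 * min (#A * x) N ≤ c / 2 * (2 * (#B * x)) := by
        gcongr; exact (min_le_right _ _).trans hNB
    _ = c * (#B * x) := by ring
    _ ≤ #(f B) := h B hBA (card_pos.1 (by omega)) hBN
    _ ≤ #(f A) := mod_cast card_le_card (hf hBA)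

lemma exp_neg_two_mul_le_one_sub {x : ℝ} (hx₀ : 0 ≤ x) (hx : x ≤ 1 / 2) :
    Real.exp (-(2 * x)) ≤ 1 - x := by
  rw [Real.exp_neg, inv_le_comm₀ (Real.exp_pos _) (by linarith),
    inv_le_iff_one_le_mul₀ (by linarith)]
  nlinarith [Real.add_one_le_exp (2 * x)]

section Expansion

variable {α : Type*} [DecidableEq α] {E : Finset (Finset α)} {N d L k D : ℝ} {A : Finset α}

/-- Vertex expansion of the hypergraph with edge set `E`, of average degree about `d` on about `N`
vertices: closed neighbourhoods of small sets have nearly the largest conceivable size, with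
relative error of order `1 / L`, and those of larger sets have this size up to a constant. -/
structure IsVertexExpanding (E : Finset (Finset α)) (N d L : ℝ) : Prop where
  sharp : ∀ A : Finset α, A.Nonempty → #A * d ≤ N / L →
    (1 - 9 / L) * (#A * d) ≤ #(closedNbhd E A)
  weak : ∀ A : Finset α, A.Nonempty → #A * d ≤ N → #A * d / 8 ≤ #(closedNbhd E A)

/-- The properties of a typical edge set of the binomial random `k`-graph on `N` vertices with
expected degree `D` from which the bound on the cop number is deduced. -/
structure IsPseudorandom (E : Finset (Finset α)) (N k D L : ℝ) : Prop
    extends IsVertexExpanding E N (k * D) L where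
  degree_le : ∀ v, (#{e ∈ E | v ∈ e} : ℝ) ≤ (1 + 2 / L) * D
  card_biUnion_edges : ∀ B ⊆ E, B.Nonempty → #B * k ≤ N → #B * k / 8 ≤ #(B.biUnion id)

namespace IsVertexExpanding

lemma min_card_mul_le (h : IsVertexExpanding E N d L) (hd : 0 < d) (hdN : d ≤ N)
    (hA : A.Nonempty) : 1 / 16 * min (#A * d) N ≤ #(closedNbhd E A) := by
  convert half_mul_min_card_mul_le closedNbhd_mono hA (c := 1 / 8) (by norm_num) hd hdN
    fun B _ hB hBN => ?_ using 2
  · norm_num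
  · linarith [h.weak B hB hBN]

lemma min_le_card_iterate (h : IsVertexExpanding E N d L) (hL : 100 ≤ L) (hd : 16 * L ≤ d)
    (hdN : d ≤ N) (hA : A.Nonempty) (i : ℕ) :
    min ((1 - 9 / L) ^ i * (#A * d ^ i)) (N / d) ≤ #((closedNbhd E)^[i] A) := by
  have hd₀ : 0 < d := by linarith
  have hL₀ : 0 < L := by linarith
  have hN₀ : 0 < N := by linarith
  have hL9 : 9 / L ≤ 1 := by rw [div_le_one hL₀]; linarith
  induction i with
  | zero => simp
  | succ i ih =>
    rw [Function.iterate_succ_apply']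
    set S := (closedNbhd E)^[i] A
    have hS : S.Nonempty := hA.mono (subset_iterate_closedNbhd i A)
    by_cases hSN : #S * d ≤ N / L
    · rcases min_le_iff.1 ih with ih | ih
      · calc min ((1 - 9 / L) ^ (i + 1) * (#A * d ^ (i + 1))) (N / d)
            ≤ (1 - 9 / L) * ((1 - 9 / L) ^ i * (#A * d ^ i) * d) :=
              (min_le_left _ _).trans_eq (by ring)
          _ ≤ (1 - 9 / L) * (#S * d) := by gcongr
          _ ≤ _ := h.sharp S hS hSN
      · rw [div_le_iff₀ hd₀] at ih
        exact absurd (ih.trans hSN) (div_lt_self hN₀ (by linarith)).not_ge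
    · push Not at hSN
      calc min ((1 - 9 / L) ^ (i + 1) * (#A * d ^ (i + 1))) (N / d)
          ≤ N / d := min_le_right _ _
        _ ≤ N / (16 * L) := by gcongr
        _ = 1 / 16 * (N / L) := by field_simp
        _ ≤ 1 / 16 * min (#S * d) N := by
            gcongr; exact le_min hSN.le (div_le_self hN₀.le (by linarith))
        _ ≤ _ := h.min_card_mul_le hd₀ hdN hS

lemma min_le_card_iterate_succ (h : IsVertexExpanding E N d L) (hL : 100 ≤ L)
    (hd : 16 * L ≤ d) (hdN : d ≤ N) (hA : A.Nonempty) {i : ℕ} (hi : i ≤ L) :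
    Real.exp (-18) / 16 * min (#A * d ^ (i + 1)) N ≤ #((closedNbhd E)^[i + 1] A) := by
  have hd₀ : 0 < d := by linarith
  have hL₀ : 0 < L := by linarith
  have hN₀ : 0 < N := by linarith
  have hloss : Real.exp (-18) ≤ (1 - 9 / L) ^ i := by
    calc Real.exp (-18) ≤ Real.exp (i * -(2 * (9 / L))) := by
          have : i * (2 * (9 / L)) ≤ L * (2 * (9 / L)) := by gcongr
          have : L * (2 * (9 / L)) = 18 := by field_simp; norm_num
          exact Real.exp_le_exp.2 (by linarith)
      _ = Real.exp (-(2 * (9 / L))) ^ i := Real.exp_nat_mul _ _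
      _ ≤ _ := by
          gcongr
          exact exp_neg_two_mul_le_one_sub (by positivity)
            ((div_le_iff₀ hL₀).2 (by linarith))
  have hexp : Real.exp (-18) ≤ 1 := Real.exp_le_one_iff.2 (by norm_num)
  rw [Function.iterate_succ_apply']
  set S := (closedNbhd E)^[i] A
  have hleN : Real.exp (-18) * min (#A * d ^ (i + 1)) N ≤ N :=
    (mul_le_mul hexp (min_le_right _ _) (by positivity) zero_le_one).trans_eq (one_mul N)
  have hS : Real.exp (-18) * min (#A * d ^ (i + 1)) N ≤ #S * d := by
    rcases min_le_iff.1 (h.min_le_card_iterate hL hd hdN hA i) with hSA | hSN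
    · calc Real.exp (-18) * min (#A * d ^ (i + 1)) N
          ≤ (1 - 9 / L) ^ i * (#A * d ^ (i + 1)) :=
            mul_le_mul hloss (min_le_left _ _) (by positivity) ((Real.exp_pos _).le.trans hloss)
        _ = (1 - 9 / L) ^ i * (#A * d ^ i) * d := by ring
        _ ≤ #S * d := by gcongr
    · exact hleN.trans ((div_le_iff₀ hd₀).1 hSN)
  calc Real.exp (-18) / 16 * min (#A * d ^ (i + 1)) N
      = 1 / 16 * (Real.exp (-18) * min (#A * d ^ (i + 1)) N) := by ring
    _ ≤ 1 / 16 * min (#S * d) N := by gcongr; exact le_min hS hleN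
    _ ≤ _ := h.min_card_mul_le hd₀ hdN (hA.mono (subset_iterate_closedNbhd i A))

lemma exists_mem_edge (h : IsVertexExpanding E N d L) (hd : 8 < d) (hdN : d ≤ N) (v : α) :
    ∃ e ∈ E, v ∈ e := by
  have hcard : 1 < #(closedNbhd E {v}) := by
    have := h.weak {v} (singleton_nonempty v) (by simpa)
    rw [card_singleton, Nat.cast_one, one_mul] at this
    exact_mod_cast (by linarith : (1 : ℝ) < #(closedNbhd E {v}))
  obtain ⟨y, hy, hne⟩ := exists_mem_ne hcard v
  rcases mem_closedNbhd_singleton.1 hy with rfl | ⟨e, he, hve, -⟩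
  · exact absurd rfl hne
  · exact ⟨e, he, hve⟩

end IsVertexExpanding

lemma card_incidentEdges_le {Δ : ℝ} (hΔ : ∀ v, (#{e ∈ E | v ∈ e} : ℝ) ≤ Δ) (A : Finset α) :
    #(incidentEdges E A) ≤ Δ * #A := by
  have hsub : incidentEdges E A ⊆ A.biUnion fun v => {e ∈ E | v ∈ e} := by
    intro e he
    obtain ⟨he, heA⟩ := mem_filter.1 he
    obtain ⟨v, hve, hvA⟩ := Finset.not_disjoint_iff.1 heA
    exact mem_biUnion.2 ⟨v, hvA, mem_filter.2 ⟨he, hve⟩⟩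
  calc (#(incidentEdges E A) : ℝ) ≤ ∑ v ∈ A, (#{e ∈ E | v ∈ e} : ℝ) :=
        mod_cast (card_le_card hsub).trans card_biUnion_le
    _ ≤ ∑ _v ∈ A, Δ := sum_le_sum fun v _ => hΔ v
    _ = Δ * #A := by rw [sum_const, nsmul_eq_mul, mul_comm]

lemma closedNbhd_eq_biUnion_incidentEdges (hcover : ∀ v, ∃ e ∈ E, v ∈ e) (A : Finset α) :
    closedNbhd E A = (incidentEdges E A).biUnion id := by
  refine union_eq_right.2 fun v hv => ?_
  obtain ⟨e, he, hve⟩ := hcover v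
  exact mem_biUnion.2 ⟨e, mem_filter.2 ⟨he, Finset.not_disjoint_iff.2 ⟨v, hve, hv⟩⟩, hve⟩

lemma card_iterate_closedNbhd_le {Δ : ℝ} {k : ℕ} (hΔ₀ : 0 ≤ Δ)
    (hΔ : ∀ v, (#{e ∈ E | v ∈ e} : ℝ) ≤ Δ) (hk : ∀ e ∈ E, #e ≤ k)
    (hcover : ∀ v, ∃ e ∈ E, v ∈ e) (A : Finset α) (r : ℕ) :
    #((closedNbhd E)^[r] A) ≤ (Δ * k) ^ r * #A := by
  induction r with
  | zero => simp
  | succ r ih =>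
    rw [Function.iterate_succ_apply', closedNbhd_eq_biUnion_incidentEdges hcover]
    set S := (closedNbhd E)^[r] A
    calc (#((incidentEdges E S).biUnion id) : ℝ) ≤ #(incidentEdges E S) * k :=
          mod_cast card_biUnion_le_card_mul _ _ _ fun e he => hk e (mem_filter.1 he).1
      _ ≤ Δ * ((Δ * k) ^ r * #A) * k := by
          gcongr; exact (card_incidentEdges_le hΔ S).trans (by gcongr)
      _ = (Δ * k) ^ (r + 1) * #A := by ring

namespace IsPseudorandom

lemma min_card_mul_le_card_biUnion (h : IsPseudorandom E N k D L) (hk : 0 < k) (hkN : k ≤ N)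
    {B : Finset (Finset α)} (hBE : B ⊆ E) (hB : B.Nonempty) :
    1 / 16 * min (#B * k) N ≤ #(B.biUnion id) := by
  convert half_mul_min_card_mul_le (f := fun B : Finset (Finset α) => B.biUnion id)
    (fun _ _ => biUnion_subset_biUnion_of_subset_left id) hB (c := 1 / 8) (by norm_num) hk hkN
    fun B' hB' hne hN => ?_ using 2
  · norm_num
  · linarith [h.card_biUnion_edges B' (hB'.trans hBE) hne hN]

lemma min_le_card_iterate_biUnion (h : IsPseudorandom E N k D L) (hL : 100 ≤ L) (hk : 0 < k)
    (hkN : k ≤ N) (hd : 16 * L ≤ k * D) (hdN : k * D ≤ N) {B : Finset (Finset α)} (hBE : B ⊆ E)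
    (hB : B.Nonempty) {i : ℕ} (hi : i ≤ L) :
    Real.exp (-18) / 256 * min (#B * k * (k * D) ^ (i + 1)) N ≤
      #((closedNbhd E)^[i + 1] (B.biUnion id)) := by
  have hcover := h.min_card_mul_le_card_biUnion hk hkN hBE hB
  set V := B.biUnion id
  set y := (k * D) ^ (i + 1)
  have hy : 1 ≤ y := one_le_pow₀ (by linarith)
  have hN₀ : 0 < N := hk.trans_le hkN
  have hV : V.Nonempty := by
    have : 0 < 1 / 16 * min (#B * k) N := by have := hB.card_pos; positivity
    exact card_pos.1 (by exact_mod_cast this.trans_le hcover)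
  have hmul : min (#B * k * y) N ≤ 16 * (#V * y) := by
    calc min (#B * k * y) N ≤ min (#B * k) N * y := by
          rw [min_mul_of_nonneg _ _ (by positivity)]
          exact min_le_min le_rfl (le_mul_of_one_le_right hN₀.le hy)
      _ ≤ 16 * #V * y := by gcongr; linarith
      _ = 16 * (#V * y) := by ring
  have hmin : 1 / 16 * min (#B * k * y) N ≤ min (#V * y) N :=
    le_min (by linarith) (by linarith [min_le_right (#B * k * y) N])
  calc Real.exp (-18) / 256 * min (#B * k * y) N
      = Real.exp (-18) / 16 * (1 / 16 * min (#B * k * y) N) := by ring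
    _ ≤ Real.exp (-18) / 16 * min (#V * y) N := by gcongr
    _ ≤ _ := h.min_le_card_iterate_succ hL hd hdN hV hi

end IsPseudorandom

end Expansion

/-! ### The cop number of pseudorandom hypergraphs -/

lemma natCast_le_log_of_pow_le {d x : ℝ} {r : ℕ} (hd : 3 ≤ d) (hx : d ^ r ≤ x) :
    r ≤ Real.log x := by
  have hd₀ : 0 < d := by linarith
  rw [Real.le_log_iff_exp_le ((pow_pos hd₀ r).trans_le hx), ← Real.exp_one_pow]
  refine le_trans ?_ hx
  gcongr
  exact Real.exp_one_lt_three.le.trans hd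

lemma one_add_two_div_pow_le {L : ℝ} {r : ℕ} (hL : 0 < L) (hr : r ≤ L) :
    (1 + 2 / L) ^ r ≤ 8 := by
  calc (1 + 2 / L) ^ r ≤ Real.exp (2 / L) ^ r := by
        gcongr; linarith [Real.add_one_le_exp (2 / L)]
    _ = Real.exp (r / L * 2) := by rw [← Real.exp_nat_mul]; ring_nf
    _ ≤ Real.exp ((2 : ℕ) * 1) := by
        rw [mul_comm, Nat.cast_two]; gcongr; exact (div_le_one hL).2 hr
    _ = Real.exp 1 ^ 2 := Real.exp_nat_mul _ _
    _ ≤ (2.8 : ℝ) ^ 2 := by gcongr; linarith [Real.exp_one_lt_d9]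
    _ ≤ 8 := by norm_num

lemma IsPseudorandom.card_iterate_singleton_le {α : Type*} [DecidableEq α]
    {E : Finset (Finset α)} {N D L : ℝ} {k r : ℕ} (h : IsPseudorandom E N k D L)
    (hk : ∀ e ∈ E, #e = k) (hcover : ∀ v, ∃ e ∈ E, v ∈ e) (hD : 0 ≤ D) (hL : 0 < L) (v : α) :
    #((closedNbhd E)^[r] {v}) ≤ (1 + 2 / L) ^ r * (k * D) ^ r := by
  have hball := card_iterate_closedNbhd_le (by positivity) h.degree_le (fun e he => (hk e he).le)
    hcover {v} r
  rw [card_singleton, Nat.cast_one, mul_one] at hball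
  refine hball.trans_eq ?_
  rw [← mul_pow]
  ring

namespace KGraph

variable {n k K r : ℕ} {G : KGraph n k} {Q D ξ : ℝ}

lemma sum_exp_neg_mul_lt_one (hn : 100 ≤ Real.log n) (hk : 1 ≤ k) (hQ : 1 ≤ Q)
    (hnQ : n = k * Q ^ 2) {f : Fin n → ℝ} (hf : ∀ v, f v ≤ 8 * Q) :
    ∑ v, 4 * Real.exp (-(10 * Real.log n / 2)) * f v < 1 := by
  have hn₀ : (0 : ℝ) < n := Nat.cast_pos.2 (Nat.pos_of_ne_zero fun h => by norm_num [h] at hn)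
  have hn₁ : 100 ≤ (n : ℝ) := hn.trans (Real.log_le_self hn₀.le)
  have hk' : (1 : ℝ) ≤ k := mod_cast hk
  have hQn : Q ≤ n := by nlinarith
  have hexp : Real.exp (-(10 * Real.log n / 2)) = ((n : ℝ) ^ 5)⁻¹ := by
    rw [show 10 * Real.log n / 2 = (5 : ℕ) * Real.log n by push_cast; ring, Real.exp_neg,
      Real.exp_nat_mul, Real.exp_log hn₀]
  calc ∑ v, 4 * Real.exp (-(10 * Real.log n / 2)) * f v
      ≤ ∑ _v : Fin n, 4 * ((n : ℝ) ^ 5)⁻¹ * (8 * n) := by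
        rw [hexp]; gcongr with v; exact (hf v).trans (by gcongr)
    _ = 32 / (n : ℝ) ^ 3 := by simp; field_simp; norm_num
    _ < 1 := by
        rw [div_lt_one (by positivity)]
        calc (32 : ℝ) < 100 ^ 3 := by norm_num
          _ ≤ (n : ℝ) ^ 3 := by gcongr

/- If the sets `F j` with `j ∈ J v` meet the closed neighbourhood of every vertex the robber can
reach from `v` in `r` moves, then `r` moves after the robber has chosen `v` distinct cops can
occupy one vertex in each of these sets, and the robber is caught. -/
lemma copNumber_le_of_targets {ι : Type*} {J : Fin n → Finset ι} {F : ι → Finset (Fin n)}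
    (hn : 100 ≤ Real.log n) (hk : 1 ≤ k) (hξ : 0 < ξ) (hQ : 1 ≤ Q) (hnQ : n = k * Q ^ 2)
    (hK : 80 / ξ * Q * Real.log n ≤ K)
    (hF : ∀ v, ∀ u ∈ (closedNbhd G.edges)^[r] {v}, ∃ j ∈ J v, F j ⊆ closedNbhd G.edges {u})
    (hJ : ∀ v, #(J v) ≤ 8 * Q)
    (hball : ∀ v, ∀ B ⊆ J v, B.Nonempty →
      ξ * min (#B * (k * Q)) n ≤ #((closedNbhd G.edges)^[r] (B.biUnion F))) :
    G.copNumber ≤ K := by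
  classical
  have hn₀ : (0 : ℝ) < n := Nat.cast_pos.2 (Nat.pos_of_ne_zero fun h => by norm_num [h] at hn)
  have : NeZero n := ⟨by exact_mod_cast hn₀.ne'⟩
  have hmin : ∀ v, ∀ B ⊆ J v, #B * (k * Q) / 8 ≤ min (#B * (k * Q)) n := fun v B hB => by
    have hB8 : #B ≤ 8 * Q := (Nat.cast_le.2 (card_le_card hB)).trans (hJ v)
    refine le_min (div_le_self (by positivity) (by norm_num)) ?_
    calc #B * (k * Q) / 8 ≤ 8 * Q * (k * Q) / 8 := by gcongr
      _ = n := by rw [hnQ]; ring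
  have hR : ∀ v, ∀ B ⊆ J v, B.Nonempty → 10 * Real.log n * #B ≤
      Fintype.card (Fin K) * #(B.biUnion fun j => (closedNbhd G.edges)^[r] (F j)) /
        Fintype.card (Fin n) := by
    intro v B hB hne
    rw [← iterate_closedNbhd_biUnion, Fintype.card_fin, Fintype.card_fin, le_div_iff₀ hn₀]
    calc 10 * Real.log n * #B * n
        = 80 / ξ * Q * Real.log n * (ξ * (#B * (k * Q) / 8)) := by rw [hnQ]; field_simp; ring
      _ ≤ K * #((closedNbhd G.edges)^[r] (B.biUnion F)) := by
          gcongr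
          exact (mul_le_mul_of_nonneg_left (hmin v B hB) hξ.le).trans (hball v B hB hne)
  obtain ⟨c, hc⟩ := exists_forall_injective_assignment hR
    (sum_exp_neg_mul_lt_one hn hk hQ hnQ hJ)
  refine copNumber_le_of_forall_copsWin (c := c) fun v => ?_
  obtain ⟨f, hf, hcf⟩ := hc v
  exact copsWin_of_injective_assignment (hF v) hf hcf

lemma copNumber_le_of_vertex_targets (hG : IsPseudorandom G.edges n k D (Real.log n))
    (hn : 100 ≤ Real.log n) (hk : 1 ≤ k) (hD : 100 * Real.log n ≤ D) (hkD : k * D ≤ n)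
    (hQ : 1 ≤ Q) (hnQ : n = k * Q ^ 2) (hK : 80 / (Real.exp (-18) / 256) * Q * Real.log n ≤ K)
    (hr : (k * D) ^ r ≤ Q) (hr' : k * Q ≤ (k * D) ^ (r + 1)) (hrn : r ≤ Real.log n) :
    G.copNumber ≤ K := by
  have hk' : (1 : ℝ) ≤ k := mod_cast hk
  have hd : 16 * Real.log n ≤ k * D := by nlinarith
  refine copNumber_le_of_targets (J := fun v => (closedNbhd G.edges)^[r] {v})
    (F := fun u => closedNbhd G.edges {u}) hn hk (by positivity) hQ hnQ hK
    (fun v u hu => ⟨u, hu, Subset.rfl⟩) (fun v => ?_) (fun v B _ hne => ?_)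
  · calc (#((closedNbhd G.edges)^[r] {v}) : ℝ)
        ≤ (1 + 2 / Real.log n) ^ r * (k * D) ^ r := hG.card_iterate_singleton_le G.uniform
          (hG.exists_mem_edge (by linarith) hkD) (by linarith) (by linarith) v
      _ ≤ 8 * Q := mul_le_mul (one_add_two_div_pow_le (by linarith) hrn) hr
          (pow_nonneg (by linarith) r) (by norm_num)
  · have hB : B.biUnion (fun u => closedNbhd G.edges {u}) = closedNbhd G.edges B := by
      ext y; simp [mem_closedNbhd (A := B)]
    rw [hB, ← Function.iterate_succ_apply]
    refine (hG.min_le_card_iterate_succ hn hd hkD hne hrn).trans' ?_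
    gcongr
    norm_num

lemma copNumber_le_of_edge_targets (hG : IsPseudorandom G.edges n k D (Real.log n))
    (hn : 100 ≤ Real.log n) (hk : 1 ≤ k) (hD : 100 * Real.log n ≤ D) (hkD : k * D ≤ n)
    (hQ : 1 ≤ Q) (hnQ : n = k * Q ^ 2) (hK : 80 / (Real.exp (-18) / 256) * Q * Real.log n ≤ K)
    (hr : (k * D) ^ (r + 1) ≤ k * Q) (hr' : Q ≤ (k * D) ^ (r + 1))
    (hrn : (r + 1 : ℕ) ≤ Real.log n) : G.copNumber ≤ K := by
  have hk' : (1 : ℝ) ≤ k := mod_cast hk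
  have hd : 16 * Real.log n ≤ k * D := by nlinarith
  have hcover := hG.exists_mem_edge (by linarith) hkD
  have hD₀ : 0 ≤ D := by linarith
  have hrn' : r ≤ Real.log n := hrn.trans' (by simp)
  refine copNumber_le_of_targets (r := r + 1) (F := id)
    (J := fun v => incidentEdges G.edges ((closedNbhd G.edges)^[r] {v}))
    hn hk (by positivity) hQ hnQ hK (fun v u hu => ?_) (fun v => ?_) (fun v B hB hne => ?_)
  · rw [Function.iterate_succ_apply', closedNbhd_eq_biUnion_incidentEdges hcover] at hu
    obtain ⟨e, he, hue⟩ := mem_biUnion.1 hu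
    exact ⟨e, he, subset_closedNbhd_singleton (mem_filter.1 he).1 hue⟩
  · set Δ := (1 + 2 / Real.log n) * D
    calc (#(incidentEdges G.edges ((closedNbhd G.edges)^[r] {v})) : ℝ)
        ≤ Δ * #((closedNbhd G.edges)^[r] {v}) := card_incidentEdges_le hG.degree_le _
      _ ≤ Δ * ((1 + 2 / Real.log n) ^ r * (k * D) ^ r) := by
          gcongr; exact hG.card_iterate_singleton_le G.uniform hcover hD₀ (by linarith) v
      _ = (1 + 2 / Real.log n) ^ (r + 1) * ((k * D) ^ (r + 1) / k) := by
          simp only [Δ, pow_succ]; field_simp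
      _ ≤ 8 * (k * Q / k) := by gcongr; exact one_add_two_div_pow_le (by linarith) hrn
      _ = 8 * Q := by field_simp
  · have hBE := hB.trans (filter_subset _ _)
    have hkn : (k : ℝ) ≤ n := (le_mul_of_one_le_right (by positivity) (by linarith)).trans hkD
    refine (hG.min_le_card_iterate_biUnion hn (by linarith) hkn hd hkD hBE hne hrn').trans' ?_
    gcongr _ * min ?_ _
    rw [← mul_assoc]
    gcongr

/-- The constant in the bound `C √(n / k) log n` on the cop number of pseudorandom `k`-graphs. -/
noncomputable def copConst : ℝ := 80 / (Real.exp (-18) / 256) + 1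

lemma copConst_pos : 0 < copConst := by rw [copConst]; positivity

theorem copNumber_le_copConst_mul (hG : IsPseudorandom G.edges n k D (Real.log n))
    (hn : 100 ≤ Real.log n) (hk : 1 ≤ k) (hD : 100 * Real.log n ≤ D) (hkD : k * D ≤ n) :
    G.copNumber ≤ copConst * √(n / k) * Real.log n := by
  have hk' : (1 : ℝ) ≤ k := mod_cast hk
  have hd : 3 ≤ k * D := by nlinarith
  have hnQ : (n : ℝ) = k * √(n / k) ^ 2 := by
    rw [Real.sq_sqrt (by positivity)]; field_simp
  have hQ : 1 ≤ √((n : ℝ) / k) := by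
    rw [Real.one_le_sqrt, one_le_div (by linarith)]
    nlinarith
  set Q := √((n : ℝ) / k)
  have hfloor : 80 / (Real.exp (-18) / 256) * Q * Real.log n ≤
      ⌊copConst * Q * Real.log n⌋₊ := by
    have := Nat.lt_floor_add_one (copConst * Q * Real.log n)
    rw [copConst] at this ⊢
    nlinarith
  have hle : G.copNumber ≤ ⌊copConst * Q * Real.log n⌋₊ := by
    obtain ⟨r, hr, hr'⟩ := exists_nat_pow_near (by nlinarith : 1 ≤ k * Q)
      (by linarith : 1 < k * D)
    have hrn : r ≤ Real.log n := natCast_le_log_of_pow_le hd (hr.trans (by nlinarith))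
    rcases le_total ((k * D) ^ r) Q with hrQ | hrQ
    · exact copNumber_le_of_vertex_targets hG hn hk hD hkD hQ hnQ hfloor hrQ hr'.le hrn
    · rcases r with _ | r
      · rw [pow_zero] at hrQ
        nlinarith
      · exact copNumber_le_of_edge_targets hG hn hk hD hkD hQ hnQ hfloor hr hrQ hrn
  exact (Nat.cast_le.2 hle).trans (Nat.floor_le (by have := copConst_pos; positivity))

end KGraph

/-! ### Binomial random subsets -/

section BinomialSubset

variable {α : Type*}

/-- The probability that the random subset of `S` containing each element independently with
probability `p` equals `E`, for `E ⊆ S`. -/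
def binomialWeight (S : Finset α) (p : ℝ) (E : Finset α) : ℝ := p ^ #E * (1 - p) ^ (#S - #E)

open Classical in
/-- The probability that the random subset of `S` containing each element independently with
probability `p` satisfies `Q`, as a finite sum like `ghProb`. -/
noncomputable def binomialProb (S : Finset α) (p : ℝ) (Q : Finset α → Prop) : ℝ :=
  ∑ E ∈ S.powerset with Q E, binomialWeight S p E

variable {S T : Finset α} {p : ℝ} {Q R : Finset α → Prop}

lemma binomialWeight_nonneg (h₀ : 0 ≤ p) (h₁ : p ≤ 1) (E : Finset α) :
    0 ≤ binomialWeight S p E :=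
  mul_nonneg (pow_nonneg h₀ _) (pow_nonneg (sub_nonneg.2 h₁) _)

lemma binomialProb_mono (h₀ : 0 ≤ p) (h₁ : p ≤ 1) (h : ∀ E ⊆ S, Q E → R E) :
    binomialProb S p Q ≤ binomialProb S p R := by
  classical
  refine sum_le_sum_of_subset_of_nonneg (fun E hE => ?_)
    fun E _ _ => binomialWeight_nonneg h₀ h₁ E
  rw [mem_filter, mem_powerset] at hE ⊢
  exact ⟨hE.1, h E hE.1 hE.2⟩

lemma binomialProb_eq_zero (h : ∀ E ⊆ S, ¬Q E) : binomialProb S p Q = 0 := by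
  classical
  rw [binomialProb, filter_false_of_mem fun E hE => h E (mem_powerset.1 hE), sum_empty]

open Classical in
lemma binomialProb_mul_le_sum {ι : Type*} (h₀ : 0 ≤ p) (h₁ : p ≤ 1) {I : Finset ι}
    {R : ι → Finset α → Prop} {c : ℝ} (h : ∀ E ⊆ S, Q E → c ≤ #{i ∈ I | R i E}) :
    binomialProb S p Q * c ≤ ∑ i ∈ I, binomialProb S p (R i) := by
  simp only [binomialProb, sum_filter, sum_mul]
  rw [sum_comm]
  refine sum_le_sum fun E hE => ?_
  rw [← sum_filter, sum_const, nsmul_eq_mul, ite_mul, zero_mul]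
  have hw := binomialWeight_nonneg (S := S) h₀ h₁ E
  split_ifs with hQ
  · rw [mul_comm]
    exact mul_le_mul_of_nonneg_right (h E (mem_powerset.1 hE) hQ) hw
  · positivity

lemma binomialProb_exists_le {ι : Type*} (h₀ : 0 ≤ p) (h₁ : p ≤ 1) (I : Finset ι)
    (R : ι → Finset α → Prop) :
    binomialProb S p (fun E => ∃ i ∈ I, R i E) ≤ ∑ i ∈ I, binomialProb S p (R i) := by
  classical
  rw [← mul_one (binomialProb S p _)]
  refine binomialProb_mul_le_sum h₀ h₁ fun E _ ⟨i, hi, hR⟩ => ?_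
  exact_mod_cast card_pos.2 ⟨i, mem_filter.2 ⟨hi, hR⟩⟩

lemma binomialProb_or_le (h₀ : 0 ≤ p) (h₁ : p ≤ 1) :
    binomialProb S p (fun E => Q E ∨ R E) ≤ binomialProb S p Q + binomialProb S p R := by
  classical
  simp only [binomialProb, sum_filter, ← sum_add_distrib]
  refine sum_le_sum fun E _ => ?_
  have hw := binomialWeight_nonneg (S := S) h₀ h₁ E
  by_cases hQ : Q E <;> by_cases hR : R E <;> simp [hQ, hR, hw]

lemma sum_binomialWeight_mul_prod [DecidableEq α] (f g : α → ℝ) :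
    ∑ E ∈ S.powerset, binomialWeight S p E * ((∏ e ∈ E, f e) * ∏ e ∈ S \ E, g e) =
      ∏ e ∈ S, (p * f e + (1 - p) * g e) := by
  rw [prod_add]
  refine sum_congr rfl fun E hE => ?_
  rw [binomialWeight, prod_mul_distrib, prod_mul_distrib, prod_const, prod_const,
    card_sdiff_of_subset (mem_powerset.1 hE)]
  ring

lemma binomialProb_true : binomialProb S p (fun _ => True) = 1 := by
  classical
  simpa [binomialProb] using sum_binomialWeight_mul_prod (S := S) (p := p) 1 1

lemma binomialProb_eq_one_sub : binomialProb S p Q = 1 - binomialProb S p (fun E => ¬Q E) := by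
  classical
  rw [eq_sub_iff_add_eq, ← binomialProb_true (S := S) (p := p)]
  simp only [binomialProb, sum_filter_add_sum_filter_not, filter_true]

lemma prod_ite_mem_one_of_subset [DecidableEq α] {M : Type*} [CommMonoid M] (hT : T ⊆ S) (x : M) :
    ∏ e ∈ S, (if e ∈ T then x else 1) = x ^ #T := by
  rw [prod_ite_mem, inter_eq_right.2 hT, prod_const]

lemma binomialProb_superset (hT : T ⊆ S) : binomialProb S p (T ⊆ ·) = p ^ #T := by
  classical
  have hsum := sum_binomialWeight_mul_prod (S := S) (p := p) 1 fun e => if e ∉ T then 1 else 0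
  rw [← prod_ite_mem_one_of_subset hT p]
  convert hsum using 1
  · rw [binomialProb, sum_filter]
    refine sum_congr rfl fun E _ => ?_
    have hTE : T ⊆ E ↔ ∀ e ∈ S \ E, e ∉ T := by grind
    rw [prod_ite_zero, hTE]
    simp
  · refine prod_congr rfl fun e _ => ?_
    split_ifs <;> simp

lemma binomialProb_disjoint (hT : T ⊆ S) :
    binomialProb S p (Disjoint · T) = (1 - p) ^ #T := by
  classical
  have hsum := sum_binomialWeight_mul_prod (S := S) (p := p) (fun e => if e ∉ T then 1 else 0) 1
  rw [← prod_ite_mem_one_of_subset hT (1 - p)]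
  convert hsum using 1
  · rw [binomialProb, sum_filter]
    refine sum_congr rfl fun E _ => ?_
    rw [prod_ite_zero]
    simp [disjoint_left]
  · refine prod_congr rfl fun e _ => ?_
    split_ifs <;> simp

lemma sum_binomialWeight_mul_pow [DecidableEq α] (hT : T ⊆ S) (x : ℝ) :
    ∑ E ∈ S.powerset, binomialWeight S p E * x ^ #(E ∩ T) = (1 - p + x * p) ^ #T := by
  have hsum := sum_binomialWeight_mul_prod (S := S) (p := p) (fun e => if e ∈ T then x else 1) 1
  rw [← prod_ite_mem_one_of_subset hT]
  convert hsum using 1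
  · simp [prod_ite_mem]
  · refine prod_congr rfl fun e _ => ?_
    simp only [Pi.one_apply]
    split_ifs <;> ring

lemma exp_le_one_add_add_sq {x : ℝ} (hx : |x| ≤ 1) : Real.exp x ≤ 1 + x + x ^ 2 := by
  have := abs_le.1 (Real.abs_exp_sub_one_sub_id_le hx)
  linarith

lemma binomialProb_mul_lt_card_inter_le [DecidableEq α] (h₀ : 0 ≤ p) (h₁ : p ≤ 1) (hT : T ⊆ S)
    {ε : ℝ} (hε₀ : 0 ≤ ε) (hε₁ : ε ≤ 1) :
    binomialProb S p (fun E => (1 + 2 * ε) * (p * #T) < #(E ∩ T)) ≤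
      Real.exp (-(ε ^ 2 * (p * #T))) := by
  classical
  set μ := p * #T
  have hmarkov : Real.exp (ε * ((1 + 2 * ε) * μ)) *
      binomialProb S p (fun E => (1 + 2 * ε) * μ < #(E ∩ T)) ≤ (1 - p + Real.exp ε * p) ^ #T := by
    rw [← sum_binomialWeight_mul_pow hT, binomialProb, mul_sum, sum_filter]
    refine sum_le_sum fun E _ => ?_
    have hw := binomialWeight_nonneg (S := S) h₀ h₁ E
    split_ifs with hE
    · rw [mul_comm, ← Real.exp_nat_mul, mul_comm (#(E ∩ T) : ℝ)]
      gcongr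
    · positivity
  have hmgf : (1 - p + Real.exp ε * p) ^ #T ≤ Real.exp (μ * (ε + ε ^ 2)) := by
    have hle : 1 - p + Real.exp ε * p ≤ Real.exp (p * (ε + ε ^ 2)) := by
      have := exp_le_one_add_add_sq (abs_le.2 ⟨by linarith, hε₁⟩)
      have := Real.add_one_le_exp (p * (ε + ε ^ 2))
      nlinarith
    calc (1 - p + Real.exp ε * p) ^ #T ≤ Real.exp (p * (ε + ε ^ 2)) ^ #T :=
          pow_le_pow_left₀ (by nlinarith [Real.exp_pos ε]) hle _
      _ = Real.exp (μ * (ε + ε ^ 2)) := by rw [← Real.exp_nat_mul]; simp only [μ]; ring_nf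
  rw [← mul_le_mul_iff_right₀ (Real.exp_pos (ε * ((1 + 2 * ε) * μ))), ← Real.exp_add]
  refine (hmarkov.trans hmgf).trans_eq ?_
  ring_nf

end BinomialSubset

/-! ### Binomial coefficients and counting edges -/

section Choose

lemma cast_choose_mul_factorial (n k : ℕ) :
    (n.choose k : ℝ) * k.factorial = ∏ i ∈ range k, ((n : ℝ) - i) := by
  rw [← descPochhammer_eval_eq_prod_range, descPochhammer_eval_eq_descFactorial,
    Nat.descFactorial_eq_factorial_mul_choose, mul_comm, Nat.cast_mul]

lemma choose_mul_pow_le_choose_mul_pow {n w : ℕ} (h : w ≤ n) (k : ℕ) :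
    (w.choose k : ℝ) * n ^ k ≤ n.choose k * w ^ k := by
  rcases lt_or_ge w k with hwk | hkw
  · rw [Nat.choose_eq_zero_of_lt hwk, Nat.cast_zero, zero_mul]
    positivity
  refine le_of_mul_le_mul_right ?_ (Nat.cast_pos.2 k.factorial_pos)
  calc (w.choose k : ℝ) * n ^ k * k.factorial = ∏ i ∈ range k, ((w : ℝ) - i) * n := by
        rw [prod_mul_distrib, ← cast_choose_mul_factorial, prod_const, card_range]; ring
    _ ≤ ∏ i ∈ range k, ((n : ℝ) - i) * w := by
        refine prod_le_prod (fun i hi => ?_) fun i hi => ?_ <;>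
        have hiw : (i : ℝ) ≤ w := mod_cast (mem_range.1 hi).le.trans hkw
        · exact mul_nonneg (sub_nonneg.2 hiw) n.cast_nonneg
        · nlinarith [(Nat.cast_le (α := ℝ)).2 h, i.cast_nonneg (α := ℝ)]
    _ = n.choose k * w ^ k * k.factorial := by
        rw [prod_mul_distrib, ← cast_choose_mul_factorial, prod_const, card_range]; ring

lemma choose_le_choose_sub_mul_exp {n w s : ℕ} (h : w + s < n) :
    (n.choose s : ℝ) ≤ (n - w).choose s * Real.exp (s * (w / (n - w - s))) := by
  have hws : (w : ℝ) + s < n := mod_cast h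
  set t : ℝ := w / (n - w - s)
  refine le_of_mul_le_mul_right ?_ (Nat.cast_pos.2 s.factorial_pos)
  calc (n.choose s : ℝ) * s.factorial = ∏ i ∈ range s, ((n : ℝ) - i) :=
        cast_choose_mul_factorial n s
    _ ≤ ∏ i ∈ range s, (((n - w : ℕ) : ℝ) - i) * Real.exp t := by
        refine prod_le_prod (fun i hi => ?_) fun i hi => ?_ <;>
        have his : (i : ℝ) < s := mod_cast mem_range.1 hi
        · linarith [w.cast_nonneg (α := ℝ)]
        · rw [Nat.cast_sub (by omega)]
          have hw : (w : ℝ) ≤ (n - w - i) * t := by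
            rw [← mul_div_assoc, le_div_iff₀ (by linarith), mul_comm]
            gcongr
          nlinarith [Real.add_one_le_exp t]
    _ = (n - w).choose s * Real.exp (s * t) * s.factorial := by
        rw [prod_mul_distrib, ← cast_choose_mul_factorial, prod_const, card_range,
          Real.exp_nat_mul]
        ring

lemma choose_succ_le_choose_sub_add (n k t : ℕ) :
    (n + 1).choose (k + 1) ≤ (n + 1 - t).choose (k + 1) + t * n.choose k := by
  induction t with
  | zero => simp
  | succ t ih =>
    rcases le_or_gt t n with htn | hnt
    · rw [Nat.sub_add_comm htn, Nat.choose_succ_succ' (n - t)] at ih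
      rw [Nat.add_sub_add_right, add_mul, one_mul]
      linarith [Nat.choose_le_choose k (Nat.sub_le n t)]
    · rw [Nat.sub_eq_zero_of_le (by omega)] at ih ⊢
      linarith [Nat.mul_le_mul_right (n.choose k) t.le_succ]

lemma choose_mul_one_sub_le_choose_sub (n k t : ℕ) :
    (n.choose k : ℝ) * (1 - t * (k / n)) ≤ (n - t).choose k := by
  rcases k with _ | k
  · simp
  rcases n with _ | n
  · simp
  have hC : ((n + 1).choose (k + 1) : ℝ) * ((k + 1 : ℕ) / (n + 1 : ℕ)) = n.choose k := by
    rw [← mul_div_assoc, div_eq_iff (by positivity), mul_comm (n.choose k : ℝ)]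
    exact_mod_cast (Nat.add_one_mul_choose_eq n k).symm
  have hle : ((n + 1).choose (k + 1) : ℝ) ≤ (n + 1 - t).choose (k + 1) + t * n.choose k :=
    mod_cast choose_succ_le_choose_sub_add n k t
  rw [← hC] at hle
  linarith

lemma le_choose_of_le_half {n k : ℕ} (hk : 1 ≤ k) (hkn : k ≤ n / 2) : n ≤ n.choose k := by
  induction k, hk using Nat.le_induction with
  | base => simp
  | succ k _ ih => exact (ih (by omega)).trans (Nat.choose_le_succ_of_lt_half_left (by omega))

end Choose

section Counting

variable {α : Type*} [Fintype α] [DecidableEq α] {A S : Finset α} {k : ℕ}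

lemma card_mul_card_mul_choose_le_card_crossing (hk : 2 ≤ k) (hAS : Disjoint A S) :
    #A * #S * (Fintype.card α - #A - #S).choose (k - 2) ≤
      #{e ∈ powersetCard k univ | ¬Disjoint e A ∧ ¬Disjoint e S} := by
  have hcard : #(powersetCard 1 A ×ˢ powersetCard 1 S ×ˢ powersetCard (k - 2) (A ∪ S)ᶜ) =
      #A * #S * (Fintype.card α - #A - #S).choose (k - 2) := by
    rw [card_product, card_product, card_powersetCard, card_powersetCard, card_powersetCard,
      card_compl, card_union_of_disjoint hAS, Nat.choose_one_right, Nat.choose_one_right,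
      Nat.sub_sub, mul_assoc]
  rw [← hcard]
  refine card_le_card_of_surjOn (fun e => (e ∩ A, e ∩ S, e \ (A ∪ S))) ?_
  rintro ⟨x, y, f⟩ hxyf
  simp only [coe_product, Set.mem_prod, mem_coe, mem_powersetCard] at hxyf
  obtain ⟨⟨hxA, hx⟩, ⟨hyS, hy⟩, hf, hfk⟩ := hxyf
  have hf' : ∀ z ∈ f, z ∉ A ∧ z ∉ S := fun z hz => by simpa using hf hz
  rw [disjoint_left] at hAS
  have hek : #(x ∪ (y ∪ f)) = k := by
    rw [card_union_of_disjoint (by grind [disjoint_left]),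
      card_union_of_disjoint (by grind [disjoint_left])]
    omega
  obtain ⟨a, rfl⟩ := card_eq_one.1 hx
  obtain ⟨b, rfl⟩ := card_eq_one.1 hy
  refine ⟨{a} ∪ ({b} ∪ f), ?_, ?_⟩
  · simp only [coe_filter, mem_powersetCard_univ, Set.mem_ofPred_eq, not_disjoint_iff]
    exact ⟨hek, ⟨a, by simp, by simpa using hxA⟩, ⟨b, by simp, by simpa using hyS⟩⟩
  · simp only [Prod.mk.injEq]
    exact ⟨by grind, by grind, by grind⟩

lemma card_filter_mem_powersetCard_univ (hk : 1 ≤ k) (v : α) :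
    #{e ∈ powersetCard k (univ : Finset α) | v ∈ e} = (Fintype.card α - 1).choose (k - 1) := by
  simpa using card_filter_powersetCard_subset {v} univ k (by simp) (by simpa)

end Counting

/-! ### Small neighbourhoods are unlikely -/

section SmallNeighborhood

variable {α : Type*} [Fintype α] [DecidableEq α] {k : ℕ} {p : ℝ}

lemma binomialProb_disjoint_closedNbhd_le (h₀ : 0 ≤ p) (h₁ : p ≤ 1) (hk : 2 ≤ k)
    (A S : Finset α) :
    binomialProb (powersetCard k univ) p (fun E => Disjoint S (closedNbhd E A)) ≤
      (1 - p) ^ (#A * #S * (Fintype.card α - #A - #S).choose (k - 2)) := by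
  by_cases hAS : Disjoint A S
  · set T : Finset (Finset α) := {e ∈ powersetCard k univ | ¬Disjoint e A ∧ ¬Disjoint e S}
    calc _ ≤ binomialProb (powersetCard k univ) p (Disjoint · T) := by
          refine binomialProb_mono h₀ h₁ fun E _ hSE => disjoint_left.2 fun e heE heT => ?_
          obtain ⟨-, heA, heS⟩ := mem_filter.1 heT
          refine heS (hSE.symm.mono_left ?_)
          exact (subset_biUnion_of_mem id (mem_filter.2 ⟨heE, heA⟩)).trans subset_union_right
      _ = (1 - p) ^ #T := binomialProb_disjoint (filter_subset _ _)
      _ ≤ _ := pow_le_pow_of_le_one (sub_nonneg.2 h₁) (sub_le_self _ h₀)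
          (card_mul_card_mul_choose_le_card_crossing hk hAS)
  · rw [binomialProb_eq_zero fun E _ hSE =>
      hAS (hSE.symm.mono_left (subset_closedNbhd E A))]
    exact pow_nonneg (sub_nonneg.2 h₁) _

/- Each `S` of size `s` is missed by the neighbourhood of `A` with small probability, while a
neighbourhood of size at most `w` misses many such `S`. -/
lemma binomialProb_card_closedNbhd_le_mul_choose_le (h₀ : 0 ≤ p) (h₁ : p ≤ 1) (hk : 2 ≤ k)
    (A : Finset α) (w s : ℕ) :
    binomialProb (powersetCard k univ) p (fun E => #(closedNbhd E A) ≤ w) *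
        (Fintype.card α - w).choose s ≤
      (Fintype.card α).choose s *
        (1 - p) ^ (#A * s * (Fintype.card α - #A - s).choose (k - 2)) := by
  calc _ ≤ ∑ S ∈ powersetCard s (univ : Finset α),
        binomialProb (powersetCard k univ) p (fun E => Disjoint S (closedNbhd E A)) := by
        refine binomialProb_mul_le_sum h₀ h₁ fun E _ hE => ?_
        have hmissed : powersetCard s (closedNbhd E A)ᶜ ⊆
            {S ∈ powersetCard s (univ : Finset α) | Disjoint S (closedNbhd E A)} := fun S hS => by
          rw [mem_powersetCard, subset_compl_iff_disjoint_right] at hS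
          simpa using hS.symm
        have hcard := card_le_card hmissed
        rw [card_powersetCard, card_compl] at hcard
        refine Nat.cast_le.2 (((Nat.choose_le_choose s (by omega)).trans hcard).trans_eq ?_)
        congr!
    _ ≤ ∑ S ∈ powersetCard s (univ : Finset α),
        (1 - p) ^ (#A * s * (Fintype.card α - #A - s).choose (k - 2)) := by
        refine sum_le_sum fun S hS => ?_
        rw [← (mem_powersetCard.1 hS).2]
        exact binomialProb_disjoint_closedNbhd_le h₀ h₁ hk A S
    _ = _ := by rw [sum_const, card_powersetCard, card_univ, nsmul_eq_mul]

lemma binomialProb_card_closedNbhd_le (h₀ : 0 ≤ p) (h₁ : p ≤ 1) (hk : 2 ≤ k) (A : Finset α)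
    {w s : ℕ} (hws : w + s < Fintype.card α) :
    binomialProb (powersetCard k univ) p (fun E => #(closedNbhd E A) ≤ w) ≤
      Real.exp (s * (w / (Fintype.card α - w - s)) -
        #A * s * (p * (Fintype.card α - #A - s).choose (k - 2))) := by
  set N := Fintype.card α
  set M := #A * s * (N - #A - s).choose (k - 2)
  have hpos : (0 : ℝ) < (N - w).choose s := mod_cast Nat.choose_pos (by omega)
  refine le_of_mul_le_mul_right ?_ hpos
  calc _ ≤ (N.choose s : ℝ) * (1 - p) ^ M :=
        binomialProb_card_closedNbhd_le_mul_choose_le h₀ h₁ hk A w s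
    _ ≤ (N - w).choose s * Real.exp (s * (w / (N - w - s))) * Real.exp (-p) ^ M := by
        have := choose_le_choose_sub_mul_exp hws
        have := Real.one_sub_le_exp_neg p
        have := sub_nonneg.2 h₁
        gcongr
    _ = _ := by
        rw [← Real.exp_nat_mul, mul_assoc, ← Real.exp_add, mul_comm]
        simp only [M]
        push_cast
        ring_nf

end SmallNeighborhood

/-- The expected number of edges of `G^k(n,p)` containing a given vertex. -/
def expDegree (n k : ℕ) (p : ℝ) : ℝ := p * (n - 1).choose (k - 1)

lemma expDegree_mul_le {n k : ℕ} {p : ℝ} (h₀ : 0 ≤ p) (hk : 2 ≤ k) (hkn : k ≤ n) (t : ℕ) :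
    expDegree n k p * ((k - 1) / n) * (1 - t * (k / n)) ≤ p * (n - t).choose (k - 2) := by
  obtain ⟨k, rfl⟩ := Nat.exists_eq_add_of_le' hk
  obtain ⟨n, rfl⟩ := Nat.exists_eq_add_of_le' (hk.trans hkn)
  have hdeg : expDegree (n + 2) (k + 2) p * (((k + 2 : ℕ) - 1) / (n + 2 : ℕ)) ≤ p * n.choose k := by
    have hC : ((n + 1).choose (k + 1) : ℝ) * (k + 1) = (n + 1) * n.choose k := by
      exact_mod_cast (Nat.add_one_mul_choose_eq n k).symm
    rw [expDegree, ← mul_div_assoc, div_le_iff₀ (by positivity)]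
    have : 0 ≤ p * n.choose k := by positivity
    calc _ = p * (((n + 1).choose (k + 1) : ℝ) * (k + 1)) := by
          push_cast [Nat.add_succ_sub_one]
          ring
      _ ≤ _ := by
          rw [hC]
          push_cast
          nlinarith
  have hdeg₀ : 0 ≤ expDegree (n + 2) (k + 2) p * (((k + 2 : ℕ) - 1) / (n + 2 : ℕ)) := by
    rw [expDegree]
    push_cast
    have : (0 : ℝ) ≤ k + 2 - 1 := by linarith [k.cast_nonneg (α := ℝ)]
    positivity
  rcases le_total (1 - t * (((k + 2 : ℕ) : ℝ) / (n + 2 : ℕ))) 0 with hneg | hpos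
  · exact (mul_nonpos_of_nonneg_of_nonpos hdeg₀ hneg).trans (by positivity)
  have hfrac : (k : ℝ) / n ≤ (k + 2 : ℕ) / (n + 2 : ℕ) := by
    have hkn' : (k : ℝ) ≤ n := mod_cast Nat.le_of_add_le_add_right hkn
    refine div_le_of_le_mul₀ (by positivity) (by positivity) ?_
    rw [div_mul_eq_mul_div, le_div_iff₀ (by positivity)]
    push_cast
    linarith
  calc _ ≤ p * n.choose k * (1 - t * ((k + 2 : ℕ) / (n + 2 : ℕ))) := by gcongr
    _ ≤ p * (n.choose k * (1 - t * (k / n))) := by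
        rw [mul_assoc]
        gcongr
    _ ≤ p * (n - t).choose k := by
        gcongr
        exact choose_mul_one_sub_le_choose_sub n k t
    _ ≤ p * (n + 2 - t).choose (k + 2 - 2) := by
        rw [Nat.add_sub_cancel]
        gcongr
        omega

/-- The range of parameters in which `G^k(n,p)` is pseudorandom; here `L` stands for `log n`. -/
structure ExpansionRegime (n k : ℕ) (p L : ℝ) : Prop where
  p_nonneg : 0 ≤ p
  p_le_one : p ≤ 1
  le_L : 100 ≤ L
  mul_L_le_k : 100 * L ≤ k
  mul_L_pow_le_expDegree : 100 * L ^ 3 ≤ expDegree n k p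
  k_mul_expDegree_le : k * expDegree n k p ≤ n

namespace ExpansionRegime

variable {n k s : ℕ} {p L η θ y : ℝ} (h : ExpansionRegime n k p L)
include h

lemma one_le_expDegree : 1 ≤ expDegree n k p := by
  have := one_le_pow₀ (n := 3) (by linarith [h.le_L] : 1 ≤ L)
  linarith [h.mul_L_pow_le_expDegree]

lemma k_pos : (0 : ℝ) < k := by linarith [h.le_L, h.mul_L_le_k]

lemma k_le_n : (k : ℝ) ≤ n :=
  (le_mul_of_one_le_right h.k_pos.le h.one_le_expDegree).trans h.k_mul_expDegree_le

lemma n_pos : (0 : ℝ) < n := h.k_pos.trans_le h.k_le_n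

lemma two_le_k : 2 ≤ k := by
  have : (2 : ℝ) ≤ k := by linarith [h.le_L, h.mul_L_le_k]
  exact_mod_cast this

lemma one_le_mul_L (hη : 1 / L ≤ η) : 1 ≤ η * L :=
  (div_le_iff₀ (by linarith [h.le_L])).1 hη

lemma pos_of_one_div_le (hη : 1 / L ≤ η) : 0 < η :=
  (one_div_pos.2 (by linarith [h.le_L])).trans_le hη

lemma le_mul_k (hη : 1 / L ≤ η) : 100 ≤ η * k := by
  nlinarith [h.one_le_mul_L hη, h.mul_L_le_k, h.pos_of_one_div_le hη]

lemma mul_sq_le_mul_expDegree (hη : 1 / L ≤ η) : 100 * L ^ 2 ≤ η * expDegree n k p :=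
  calc 100 * L ^ 2 ≤ η * L * (100 * L ^ 2) :=
        le_mul_of_one_le_left (by positivity) (h.one_le_mul_L hη)
    _ = η * (100 * L ^ 3) := by ring
    _ ≤ η * expDegree n k p :=
        mul_le_mul_of_nonneg_left h.mul_L_pow_le_expDegree (h.pos_of_one_div_le hη).le

lemma le_mul_expDegree (hη : 1 / L ≤ η) : 100 ≤ η * expDegree n k p := by
  nlinarith [h.mul_sq_le_mul_expDegree hη, h.le_L]

lemma mul_L_le_sq_mul_expDegree (hη : 1 / L ≤ η) : 100 * L ≤ η ^ 2 * expDegree n k p := by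
  have hL := h.le_L
  have := h.pos_of_one_div_le hη
  calc 100 * L ≤ η * L * (100 * L) := le_mul_of_one_le_left (by linarith) (h.one_le_mul_L hη)
    _ = η * (100 * L ^ 2) := by ring
    _ ≤ η * (η * expDegree n k p) :=
        mul_le_mul_of_nonneg_left (h.mul_sq_le_mul_expDegree hη) this.le
    _ = η ^ 2 * expDegree n k p := by ring

lemma exists_sampleSize (hη : 1 / L ≤ η) : ∃ s : ℕ, η * n ≤ s * k ∧ s * k ≤ 2 * (η * n) := by
  have hk := h.k_pos
  have hη₀ := h.pos_of_one_div_le hη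
  have hkn : k ≤ η * n := by nlinarith [h.le_mul_expDegree hη, h.k_mul_expDegree_le]
  refine ⟨⌈η * n / k⌉₊, ?_, ?_⟩
  · rw [← div_le_iff₀ hk]
    exact Nat.le_ceil _
  · have hceil := (Nat.ceil_lt_add_one (a := η * n / k) (by positivity)).le
    calc _ ≤ (η * n / k + 1) * k := by gcongr
      _ = η * n + k := by field_simp
      _ ≤ _ := by linarith

lemma mul_le_mul_choose {a s : ℕ} (hη : 1 / L ≤ η) (hη' : η ≤ 1 / 4)
    (ha : a * (k * expDegree n k p) ≤ n) (hs : s * k ≤ 2 * (η * n)) :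
    (1 - 2.1 * η) * (expDegree n k p * k / n) ≤ p * (n - a - s).choose (k - 2) := by
  have hη₀ := h.pos_of_one_div_le hη
  have hk := h.k_pos
  have hn := h.n_pos
  have hD : 0 ≤ expDegree n k p := by linarith [h.one_le_expDegree]
  have hk' : (1 - η / 100) * k ≤ k - 1 := by linarith [h.le_mul_k hη]
  have hak : a * k * 100 ≤ η * n := by
    have := mul_le_mul_of_nonneg_left (h.le_mul_expDegree hη) (show (0 : ℝ) ≤ a * k by positivity)
    nlinarith
  have hask : ((a + s : ℕ) : ℝ) * (k / n) ≤ 2.01 * η := by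
    rw [← mul_div_assoc, div_le_iff₀ hn]
    push_cast
    linarith
  calc _ ≤ (1 - η / 100) * (1 - 2.01 * η) * (expDegree n k p * k / n) := by
        gcongr
        nlinarith
    _ = expDegree n k p * ((1 - η / 100) * k / n) * (1 - 2.01 * η) := by ring
    _ ≤ expDegree n k p * ((k - 1) / n) * (1 - (a + s : ℕ) * (k / n)) := by
        have hk₁ : 0 ≤ (k : ℝ) - 1 := by nlinarith
        have : 0 ≤ 1 - 2.01 * η := by linarith
        gcongr
    _ ≤ _ := by
        rw [Nat.sub_sub]
        exact expDegree_mul_le h.p_nonneg h.two_le_k (mod_cast h.k_le_n) (a + s)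

lemma sampleSize_le (hs : s * k ≤ 2 * (η * n)) : s ≤ η * n := by
  have : (2 : ℝ) ≤ k := mod_cast h.two_le_k
  nlinarith [s.cast_nonneg (α := ℝ)]

lemma mul_div_sub_sub_le {a s w : ℕ} (hη' : η ≤ 1 / 4) (hy : y ≤ 1 / 4)
    (hs : s * k ≤ 2 * (η * n)) (hw : w ≤ θ * (a * (k * expDegree n k p))) (hwy : w ≤ y * n)
    (hθ : θ ≤ (1 - 3 * η) * (1 - y - η)) :
    s * (w / (n - w - s)) ≤ (1 - 3 * η) * (a * s * (expDegree n k p * k / n)) := by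
  have hn := h.n_pos
  have hk := h.k_pos
  have hD : 0 ≤ expDegree n k p := by linarith [h.one_le_expDegree]
  have hsn := h.sampleSize_le hs
  have hden : (1 - y - η) * n ≤ n - w - s := by linarith
  have hden₀ : 0 < (1 - y - η) * n := mul_pos (by linarith) hn
  calc _ ≤ s * ((1 - 3 * η) * (1 - y - η) * (a * (k * expDegree n k p)) / ((1 - y - η) * n)) := by
        gcongr s * ?_
        have hw' := hw.trans (mul_le_mul_of_nonneg_right hθ (by positivity))
        exact div_le_div₀ (w.cast_nonneg.trans hw') hw' hden₀ hden
    _ = _ := by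
        have : 1 - y - η ≠ 0 := by linarith
        field_simp

lemma binomialProb_card_closedNbhd_lt_le {A : Finset (Fin n)} (hη : 1 / L ≤ η) (hη' : η ≤ 1 / 4)
    (hy : y ≤ 1 / 4) (hA : #A * (k * expDegree n k p) ≤ n) (hθ₀ : 0 ≤ θ)
    (hθy : θ * (#A * (k * expDegree n k p)) ≤ y * n) (hθ : θ ≤ (1 - 3 * η) * (1 - y - η)) :
    binomialProb (powersetCard k univ) p
        (fun E => #(closedNbhd E A) < θ * (#A * (k * expDegree n k p))) ≤
      Real.exp (-(3 * L)) ^ #A := by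
  obtain ⟨s, hηs, hsη⟩ := h.exists_sampleSize hη
  have hk := h.k_pos
  have hn := h.n_pos
  have hη₀ := h.pos_of_one_div_le hη
  have hD := h.one_le_expDegree
  set D := expDegree n k p
  set w := ⌊θ * (#A * (k * D))⌋₊
  have hw : w ≤ θ * (#A * (k * D)) := Nat.floor_le (by positivity)
  have hwsn : w + s < n := by
    have := h.sampleSize_le hsη
    have : (w : ℝ) + s < n := by nlinarith
    exact_mod_cast this
  have hexp₁ := h.mul_div_sub_sub_le hη' hy hsη hw (hw.trans hθy) hθ
  have hexp₂ := mul_le_mul_of_nonneg_left (h.mul_le_mul_choose hη hη' hA hsη)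
    (show (0 : ℝ) ≤ #A * s by positivity)
  have hgap : 3 * L * #A ≤ 0.9 * η * (#A * s * (D * k / n)) := by
    have hD₀ : 0 ≤ D * #A := by positivity
    calc 3 * L * #A ≤ 0.9 * (η ^ 2 * D) * #A := by
          refine mul_le_mul_of_nonneg_right ?_ (Nat.cast_nonneg _)
          linarith [h.mul_L_le_sq_mul_expDegree hη, h.le_L]
      _ = 0.9 * η * (#A * D * (η * n) / n) := by field_simp
      _ ≤ 0.9 * η * (#A * D * (s * k) / n) := by gcongr
      _ = _ := by ring
  calc _ ≤ binomialProb (powersetCard k univ) p (fun E => #(closedNbhd E A) ≤ w) :=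
        binomialProb_mono h.p_nonneg h.p_le_one fun E _ hE => Nat.le_floor hE.le
    _ ≤ _ := binomialProb_card_closedNbhd_le h.p_nonneg h.p_le_one h.two_le_k A
        (by rwa [Fintype.card_fin])
    _ ≤ Real.exp (-(3 * L)) ^ #A := by
        rw [← Real.exp_nat_mul, Real.exp_le_exp, Fintype.card_fin]
        linarith

end ExpansionRegime

/-! ### Pseudorandomness with high probability -/

lemma choose_mul_pow_le_exp (n w : ℕ) {z : ℝ} (hz : 0 ≤ z) :
    n.choose w * z ^ w ≤ Real.exp (n * z) := by
  rcases lt_or_ge n w with hnw | hwn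
  · rw [Nat.choose_eq_zero_of_lt hnw, Nat.cast_zero, zero_mul]
    exact (Real.exp_pos _).le
  calc n.choose w * z ^ w ≤ ∑ m ∈ range (n + 1), z ^ m * 1 ^ (n - m) * n.choose m := by
        have := single_le_sum (f := fun m => z ^ m * 1 ^ (n - m) * (n.choose m : ℝ))
          (fun _ _ => by positivity) (mem_range_succ_iff.2 hwn)
        simpa [mul_comm] using this
    _ = (z + 1) ^ n := (add_pow z 1 n).symm
    _ ≤ Real.exp z ^ n := by gcongr; exact Real.add_one_le_exp z
    _ = Real.exp (n * z) := (Real.exp_nat_mul z n).symm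

lemma exp_neg_natCast_mul_log {n : ℕ} (hn : n ≠ 0) (j : ℕ) :
    Real.exp (-(j * Real.log n)) = ((n : ℝ) ^ j)⁻¹ := by
  rw [Real.exp_neg, Real.exp_nat_mul, Real.exp_log (by positivity)]

section UnionBounds

variable {α V : Type*} [Fintype V] {S : Finset α} {k : ℕ} {p : ℝ}

lemma binomialProb_exists_nonempty_le (h₀ : 0 ≤ p) (h₁ : p ≤ 1) {P : Finset V → Prop}
    {R : Finset V → Finset α → Prop} {q : ℝ} (hq : 0 ≤ q) (hq₁ : q * Fintype.card V ≤ 1)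
    (hR : ∀ A, A.Nonempty → P A → binomialProb S p (R A) ≤ q ^ #A) :
    binomialProb S p (fun E => ∃ A, A.Nonempty ∧ P A ∧ R A E) ≤ 2 * (q * Fintype.card V) := by
  classical
  set I : Finset (Finset V) := {A | A.Nonempty ∧ P A}
  calc _ ≤ binomialProb S p (fun E => ∃ A ∈ I, R A E) :=
        binomialProb_mono h₀ h₁ fun E _ ⟨A, hA, hPA, hAE⟩ => ⟨A, by simp [I, hA, hPA], hAE⟩
    _ ≤ ∑ A ∈ I, q ^ #A :=
        (binomialProb_exists_le h₀ h₁ _ R).trans (sum_le_sum fun A hA =>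
          hR A (mem_filter.1 hA).2.1 (mem_filter.1 hA).2.2)
    _ ≤ ∑ A ∈ (univ : Finset V).powerset with A.Nonempty, q ^ #A :=
        sum_le_sum_of_subset_of_nonneg (fun A hA => by simpa using (mem_filter.1 hA).2.1)
          fun _ _ _ => pow_nonneg hq _
    _ ≤ _ := sum_pow_card_nonempty_le univ hq hq₁

variable [DecidableEq V]

lemma binomialProb_exists_card_biUnion_le (h₀ : 0 ≤ p) (h₁ : p ≤ 1) {w : ℕ}
    (hw : w ≤ Fintype.card V) (b : ℕ) :
    binomialProb (powersetCard k (univ : Finset V)) p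
        (fun E => ∃ B ⊆ E, #B = b ∧ #(B.biUnion id) ≤ w) ≤
      (Fintype.card V).choose w * (w.choose k * p) ^ b := by
  set I := (powersetCard w (univ : Finset V)).sigma fun W => powersetCard b (powersetCard k W)
  calc _ ≤ binomialProb (powersetCard k (univ : Finset V)) p (fun E => ∃ i ∈ I, i.2 ⊆ E) := by
        refine binomialProb_mono h₀ h₁ fun E hE ⟨B, hBE, hBb, hBw⟩ => ?_
        obtain ⟨W, hBW, hW⟩ := exists_superset_card_eq hBw hw
        refine ⟨⟨W, B⟩, ?_, hBE⟩
        simp only [I, mem_sigma, mem_powersetCard]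
        refine ⟨⟨subset_univ W, hW⟩, fun e he => mem_powersetCard.2 ⟨?_, ?_⟩, hBb⟩
        · exact (subset_biUnion_of_mem id he).trans hBW
        · exact (mem_powersetCard.1 (hE (hBE he))).2
    _ ≤ ∑ _i ∈ I, p ^ b := by
        refine (binomialProb_exists_le h₀ h₁ I _).trans (sum_le_sum fun ⟨W, B⟩ hWB => le_of_eq ?_)
        obtain ⟨-, hB, hBb⟩ : _ ∧ B ⊆ powersetCard k W ∧ #B = b := by
          simpa only [I, mem_sigma, mem_powersetCard] using hWB
        rw [binomialProb_superset (hB.trans (powersetCard_mono (subset_univ _))), hBb]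
    _ = (Fintype.card V).choose w * ((w.choose k).choose b * p ^ b) := by
        have hI : #I = (Fintype.card V).choose w * (w.choose k).choose b := by
          rw [card_sigma, sum_congr rfl fun W hW => by
            rw [card_powersetCard, card_powersetCard, (mem_powersetCard.1 hW).2],
            sum_const, card_powersetCard, card_univ, smul_eq_mul]
        rw [sum_const, hI, nsmul_eq_mul, Nat.cast_mul, mul_assoc]
    _ ≤ _ := by
        rw [mul_pow]
        gcongr
        exact_mod_cast Nat.choose_le_pow (w.choose k) b

end UnionBounds

namespace ExpansionRegime

variable {n k : ℕ} {p : ℝ} (h : ExpansionRegime n k p (Real.log n))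
include h

lemma one_le_n : (1 : ℝ) ≤ n := Nat.one_le_cast.2 (Nat.cast_pos.1 h.n_pos)

lemma n_ne_zero : n ≠ 0 := (Nat.cast_pos.1 h.n_pos).ne'

lemma exp_neg_three_mul_log_mul_le : Real.exp (-(3 * Real.log n)) * n ≤ 1 / n := by
  have hn := h.n_pos
  have hexp := exp_neg_natCast_mul_log h.n_ne_zero 3
  push_cast at hexp
  rw [hexp, inv_mul_eq_div, div_le_div_iff₀ (by positivity) hn]
  nlinarith [h.one_le_n]

lemma binomialProb_exists_lt_degree_le :
    binomialProb (powersetCard k (univ : Finset (Fin n))) p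
        (fun E => ∃ v, (1 + 2 / Real.log n) * expDegree n k p < #{e ∈ E | v ∈ e}) ≤ 1 / n := by
  have hL := h.le_L
  have hn := h.n_pos
  set L := Real.log n
  have hstar : ∀ v : Fin n, binomialProb (powersetCard k (univ : Finset (Fin n))) p
      (fun E => (1 + 2 / L) * expDegree n k p < #{e ∈ E | v ∈ e}) ≤ ((n : ℝ) ^ 2)⁻¹ := by
    intro v
    set T : Finset (Finset (Fin n)) := {e ∈ powersetCard k univ | v ∈ e}
    have hT : p * #T = expDegree n k p := by
      rw [card_filter_mem_powersetCard_univ (by linarith [h.two_le_k]), Fintype.card_fin, expDegree]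
    calc _ ≤ binomialProb (powersetCard k (univ : Finset (Fin n))) p
          (fun E => (1 + 2 * (1 / L)) * (p * #T) < #(E ∩ T)) := by
          refine binomialProb_mono h.p_nonneg h.p_le_one fun E hE hlt => ?_
          have hET : E ∩ T = {e ∈ E | v ∈ e} := by
            rw [← filter_mem_eq_inter]
            exact filter_congr fun e he => by simp [T, mem_powersetCard.1 (hE he)]
          rwa [hT, hET, mul_one_div]
      _ ≤ Real.exp (-((1 / L) ^ 2 * (p * #T))) :=
          binomialProb_mul_lt_card_inter_le h.p_nonneg h.p_le_one (filter_subset _ _)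
            (by positivity) (by rw [div_le_one] <;> linarith)
      _ ≤ Real.exp (-((2 : ℕ) * L)) := by
          rw [hT, Real.exp_le_exp, Nat.cast_two]
          linarith [h.mul_L_le_sq_mul_expDegree le_rfl]
      _ = ((n : ℝ) ^ 2)⁻¹ := exp_neg_natCast_mul_log h.n_ne_zero 2
  calc _ ≤ ∑ _v : Fin n, ((n : ℝ) ^ 2)⁻¹ := by
        have := binomialProb_exists_le (S := powersetCard k (univ : Finset (Fin n))) h.p_nonneg
          h.p_le_one univ fun v E => (1 + 2 / L) * expDegree n k p < #{e ∈ E | v ∈ e}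
        simp only [mem_univ, true_and] at this
        exact this.trans (sum_le_sum fun v _ => hstar v)
    _ = 1 / n := by
        rw [sum_const, card_univ, Fintype.card_fin, nsmul_eq_mul]
        field_simp

lemma binomialProb_exists_nonempty_le_two_div {P : Finset (Fin n) → Prop}
    {R : Finset (Fin n) → Finset (Finset (Fin n)) → Prop}
    (hR : ∀ A, A.Nonempty → P A → binomialProb (powersetCard k univ) p (R A) ≤
      Real.exp (-(3 * Real.log n)) ^ #A) :
    binomialProb (powersetCard k univ) p (fun E => ∃ A, A.Nonempty ∧ P A ∧ R A E) ≤ 2 / n := by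
  have hq := h.exp_neg_three_mul_log_mul_le
  have hn : (1 : ℝ) / n ≤ 1 := (div_le_one h.n_pos).2 h.one_le_n
  have hle := binomialProb_exists_nonempty_le h.p_nonneg h.p_le_one (Real.exp_pos _).le
    (by rw [Fintype.card_fin]; exact hq.trans hn) hR
  rw [Fintype.card_fin] at hle
  calc _ ≤ _ := hle
    _ ≤ 2 * (1 / n) := by gcongr
    _ = 2 / n := mul_one_div 2 (n : ℝ)

lemma binomialProb_not_sharp_le :
    binomialProb (powersetCard k univ) p (fun E => ∃ A : Finset (Fin n), A.Nonempty ∧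
      #A * (k * expDegree n k p) ≤ n / Real.log n ∧
      #(closedNbhd E A) < (1 - 9 / Real.log n) * (#A * (k * expDegree n k p))) ≤ 2 / n := by
  refine h.binomialProb_exists_nonempty_le_two_div fun A _ hA => ?_
  have hL := h.le_L
  have hk := h.k_pos
  have hn := h.n_pos
  have hD := h.one_le_expDegree
  set L := Real.log n
  have hη : 1 / L ≤ 1 / 100 := by gcongr
  have hθ : 9 / L = 9 * (1 / L) := (mul_one_div 9 L).symm
  have hη₀ : 0 < 1 / L := by positivity
  rw [div_eq_inv_mul, ← one_div] at hA
  refine h.binomialProb_card_closedNbhd_lt_le (y := 1 / L) le_rfl (by linarith) (by linarith)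
    (hA.trans (mul_le_of_le_one_left hn.le (by linarith))) (by linarith)
    ((mul_le_of_le_one_left (by positivity) (by linarith)).trans hA) ?_
  rw [hθ]
  nlinarith

lemma binomialProb_not_weak_le :
    binomialProb (powersetCard k univ) p (fun E => ∃ A : Finset (Fin n), A.Nonempty ∧
      #A * (k * expDegree n k p) ≤ n ∧
      #(closedNbhd E A) < #A * (k * expDegree n k p) / 8) ≤ 2 / n := by
  refine h.binomialProb_exists_nonempty_le_two_div fun A _ hA => ?_
  have hη : 1 / Real.log n ≤ 1 / 4 := one_div_le_one_div_of_le (by norm_num) (by linarith [h.le_L])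
  simp only [div_eq_inv_mul _ (8 : ℝ)]
  exact h.binomialProb_card_closedNbhd_lt_le (y := 1 / 8) hη le_rfl (by norm_num) hA (by norm_num)
    (by linarith) (by norm_num)

lemma mul_choose_le_exp : p * n.choose k ≤ Real.exp (2 * Real.log n) := by
  have hk := h.k_pos
  have hn := h.n_pos
  have hp := h.p_nonneg
  have hk₂ := h.two_le_k
  have hchoose : (n : ℝ) * (n - 1).choose (k - 1) = n.choose k * k := by
    have := Nat.add_one_mul_choose_eq (n - 1) (k - 1)
    rw [Nat.sub_add_cancel (Nat.cast_pos.1 hn), Nat.sub_add_cancel (by omega)] at this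
    exact_mod_cast this
  have hk₁ : (1 : ℝ) ≤ k := by exact_mod_cast (by omega : 1 ≤ k)
  calc p * n.choose k ≤ p * n.choose k * k := le_mul_of_one_le_right (by positivity) hk₁
    _ = n * expDegree n k p := by rw [expDegree, mul_assoc, ← hchoose]; ring
    _ ≤ n * n := by nlinarith [h.k_mul_expDegree_le, h.one_le_expDegree]
    _ = Real.exp (2 * Real.log n) := by rw [two_mul, Real.exp_add, Real.exp_log hn]

lemma choose_mul_pow_choose_mul_le {b w : ℕ} (hb : 1 ≤ b) (hbk : b * k ≤ n)
    (hw : 8 * w ≤ b * k) :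
    n.choose w * (w.choose k * p) ^ b ≤ Real.exp (-(3 * Real.log n)) := by
  have hn := h.n_pos
  have hk := h.k_pos
  have hp := h.p_nonneg
  set L := Real.log n
  set z : ℝ := b * k / (8 * n)
  have hzn : n * z = b * k / 8 := by simp only [z]; field_simp
  have hw' : (w : ℝ) ≤ n * z := by
    rw [hzn, le_div_iff₀' (by norm_num)]
    exact_mod_cast hw
  have hz : z ≤ Real.exp (-1) := by
    have hbk' : (b : ℝ) * k ≤ n := mod_cast hbk
    rw [Real.exp_neg, ← one_div, div_le_div_iff₀ (by positivity) (Real.exp_pos 1)]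
    nlinarith [Real.exp_one_lt_three, Real.exp_pos 1]
  have hchoose : w.choose k * p ≤ Real.exp (2 * L) * z ^ k := by
    refine le_of_mul_le_mul_right ?_ (pow_pos hn k)
    calc w.choose k * p * n ^ k = w.choose k * n ^ k * p := by ring
      _ ≤ n.choose k * (n * z) ^ k * p := by
          have := choose_mul_pow_le_choose_mul_pow (show w ≤ n by omega) k
          refine mul_le_mul_of_nonneg_right (this.trans ?_) hp
          gcongr
      _ = p * n.choose k * z ^ k * n ^ k := by ring
      _ ≤ _ := by gcongr; exact h.mul_choose_le_exp
  obtain ⟨m, hm⟩ : ∃ m, k * b = w + m := Nat.exists_eq_add_of_le (by linarith)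
  calc _ ≤ (n.choose w : ℝ) * (Real.exp (2 * L) * z ^ k) ^ b := by gcongr
    _ = n.choose w * z ^ w * Real.exp (2 * L) ^ b * z ^ m := by
        rw [mul_pow, ← pow_mul, hm, pow_add]
        ring
    _ ≤ Real.exp (n * z) * Real.exp (2 * L) ^ b * Real.exp (-1) ^ m := by
        gcongr
        exact choose_mul_pow_le_exp n w (by positivity)
    _ = Real.exp (b * k / 8 + b * (2 * L) + m * -1) := by
        rw [hzn, Real.exp_add, Real.exp_add, Real.exp_nat_mul, Real.exp_nat_mul]
    _ ≤ _ := by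
        rw [Real.exp_le_exp]
        have hb' : (1 : ℝ) ≤ b := mod_cast hb
        have hm' : (k : ℝ) * b = w + m := mod_cast hm
        nlinarith [h.mul_L_le_k, h.le_L]

lemma binomialProb_not_card_biUnion_edges_le :
    binomialProb (powersetCard k univ) p (fun E => ∃ B ⊆ E, B.Nonempty ∧ (#B * k : ℝ) ≤ n ∧
      (#((B : Finset (Finset (Fin n))).biUnion id) : ℝ) < #B * k / 8) ≤ 1 / n := by
  have hk := h.two_le_k
  set I := {b ∈ Icc 1 n | b * k ≤ n}
  have hcard : #I ≤ n := (card_filter_le _ _).trans (by simp)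
  calc _ ≤ binomialProb (powersetCard k (univ : Finset (Fin n))) p
        (fun E => ∃ b ∈ I, ∃ B ⊆ E, #B = b ∧ #(B.biUnion id) ≤ b * k / 8) := by
        refine binomialProb_mono h.p_nonneg h.p_le_one fun E _ ⟨B, hBE, hB, hBk, hlt⟩ => ?_
        have hBk' : #B * k ≤ n := mod_cast hBk
        refine ⟨#B, mem_filter.2 ⟨mem_Icc.2 ⟨hB.card_pos, by nlinarith⟩, hBk'⟩, B, hBE, rfl, ?_⟩
        rw [lt_div_iff₀ (by norm_num)] at hlt
        exact (Nat.le_div_iff_mul_le (by norm_num)).2 (by exact_mod_cast hlt.le)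
    _ ≤ ∑ b ∈ I, Real.exp (-(3 * Real.log n)) := by
        refine (binomialProb_exists_le h.p_nonneg h.p_le_one I _).trans
          (sum_le_sum fun b hb => ?_)
        obtain ⟨hbn, hbk⟩ := mem_filter.1 hb
        refine (binomialProb_exists_card_biUnion_le h.p_nonneg h.p_le_one ?_ b).trans ?_
        · rw [Fintype.card_fin]
          omega
        · rw [Fintype.card_fin]
          exact h.choose_mul_pow_choose_mul_le (mem_Icc.1 hbn).1 hbk (Nat.mul_div_le _ _)
    _ ≤ Real.exp (-(3 * Real.log n)) * n := by
        rw [sum_const, nsmul_eq_mul, mul_comm]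
        gcongr
    _ ≤ 1 / n := h.exp_neg_three_mul_log_mul_le

theorem one_sub_le_binomialProb_isPseudorandom :
    1 - 6 / n ≤ binomialProb (powersetCard k (univ : Finset (Fin n))) p
      (fun E => IsPseudorandom E n k (expDegree n k p) (Real.log n)) := by
  have hbad := (binomialProb_or_le h.p_nonneg h.p_le_one).trans (add_le_add
    h.binomialProb_not_sharp_le ((binomialProb_or_le h.p_nonneg h.p_le_one).trans (add_le_add
    h.binomialProb_not_weak_le ((binomialProb_or_le h.p_nonneg h.p_le_one).trans (add_le_add
    h.binomialProb_exists_lt_degree_le h.binomialProb_not_card_biUnion_edges_le)))))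
  have hsum : (2 : ℝ) / n + (2 / n + (1 / n + 1 / n)) = 6 / n := by ring
  rw [hsum] at hbad
  rw [binomialProb_eq_one_sub]
  refine sub_le_sub_left ((binomialProb_mono h.p_nonneg h.p_le_one fun E _ hE => ?_).trans hbad) 1
  contrapose! hE
  exact ⟨⟨hE.1, hE.2.1⟩, hE.2.2.1, hE.2.2.2⟩

end ExpansionRegime

/-! ### The cop number of the random hypergraph -/

section RandomKGraph

variable {n k : ℕ} {p : ℝ} {Q : KGraph n k → Prop}

lemma ghProb_le_one (h₀ : 0 ≤ p) (h₁ : p ≤ 1) : ghProb n k p Q ≤ 1 := by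
  classical
  rw [← binomialProb_true (S := powersetCard k (univ : Finset (Fin n))) (p := p), ghProb,
    binomialProb, filter_true]
  refine sum_le_sum fun E _ => ?_
  have hw := binomialWeight_nonneg (S := powersetCard k univ) h₀ h₁ E
  split_ifs
  exacts [le_rfl, hw, hw]

lemma binomialProb_le_ghProb (h₀ : 0 ≤ p) (h₁ : p ≤ 1) {R : Finset (Finset (Fin n)) → Prop}
    (h : ∀ G : KGraph n k, R G.edges → Q G) :
    binomialProb (powersetCard k univ) p R ≤ ghProb n k p Q := by
  classical
  rw [ghProb, binomialProb, sum_filter]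
  refine sum_le_sum fun E hE => ?_
  have hu : ∀ e ∈ E, #e = k := fun e he => (mem_powersetCard.1 (mem_powerset.1 hE he)).2
  have hw := binomialWeight_nonneg (S := powersetCard k univ) h₀ h₁ E
  rw [dif_pos hu]
  split_ifs with hR hQ hQ
  exacts [le_rfl, absurd (h ⟨E, hu⟩ hR) hQ, hw, le_rfl]

end RandomKGraph

namespace ExpansionRegime

variable {n k : ℕ} {p : ℝ}

theorem one_sub_le_ghProb_copNumber_le (h : ExpansionRegime n k p (Real.log n)) :
    1 - 6 / n ≤ ghProb n k p
      (fun G => (G.copNumber : ℝ) ≤ KGraph.copConst * √(n / k) * Real.log n) := by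
  have hL := h.le_L
  have hk := h.two_le_k
  have hD : 100 * Real.log n ≤ expDegree n k p := by
    have := h.mul_L_pow_le_expDegree
    nlinarith [le_self_pow₀ (by linarith : 1 ≤ Real.log n) three_ne_zero]
  exact h.one_sub_le_binomialProb_isPseudorandom.trans <|
    binomialProb_le_ghProb h.p_nonneg h.p_le_one fun G hG =>
      KGraph.copNumber_le_copConst_mul hG hL (by omega) hD h.k_mul_expDegree_le

lemma of_le_div (hL : 100 ≤ Real.log n) (hk : 100 ≤ k / Real.log n)
    (hub : expDegree n k p ≤ n / k) (hlb : 100 ≤ expDegree n k p / Real.log n ^ 3) :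
    ExpansionRegime n k p (Real.log n) := by
  rw [le_div_iff₀ (by positivity)] at hk hlb
  have hk₀ : (0 : ℝ) < k := by linarith
  have hkD := hub
  rw [le_div_iff₀' hk₀] at hkD
  have hD : 100 ≤ expDegree n k p := by
    linarith [one_le_pow₀ (n := 3) (by linarith : 1 ≤ Real.log n)]
  have hchoose : (n : ℝ) - 1 ≤ (n - 1).choose (k - 1) := by
    have hkn : 100 * k ≤ n := by
      have : 100 * (k : ℝ) ≤ n := by nlinarith
      exact_mod_cast this
    have hk₂ : 2 ≤ k := by
      have : (2 : ℝ) ≤ k := by linarith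
      exact_mod_cast this
    have := le_choose_of_le_half (show 1 ≤ k - 1 by omega) (show k - 1 ≤ (n - 1) / 2 by omega)
    rw [← Nat.cast_pred (by omega)]
    exact_mod_cast this
  have hp₀ : 0 ≤ p := by
    by_contra! hp
    have := mul_nonpos_of_nonpos_of_nonneg hp.le ((n - 1).choose (k - 1)).cast_nonneg
    rw [expDegree] at hD
    linarith
  have hp₁ : p ≤ 1 := by
    by_contra! hp
    have : (n - 1).choose (k - 1) ≤ expDegree n k p := le_mul_of_one_le_left (by positivity) hp.le
    nlinarith
  exact ⟨hp₀, hp₁, hL, hk, hlb, hkD⟩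

end ExpansionRegime

theorem whp_Gknp_cop_number_general :
    ∃ C : ℝ, 0 < C ∧ ∀ (k : ℕ → ℕ) (p : ℕ → ℝ),
      (∀ᶠ n : ℕ in Filter.atTop, 100 ≤ k n / Real.log n) →
      (∀ᶠ n : ℕ in Filter.atTop, expDegree n (k n) (p n) ≤ n / k n) →
      (∀ᶠ n : ℕ in Filter.atTop, 100 ≤ expDegree n (k n) (p n) / Real.log n ^ 3) →
      Filter.Tendsto
        (fun n => ghProb n (k n) (p n) (fun G =>
          (G.copNumber : ℝ) ≤ C * √(n / k n) * Real.log n))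
        Filter.atTop (nhds 1) := by
  refine ⟨KGraph.copConst, KGraph.copConst_pos, fun k p hk hub hlb => ?_⟩
  have hlog : ∀ᶠ n : ℕ in Filter.atTop, 100 ≤ Real.log n :=
    (Real.tendsto_log_atTop.comp tendsto_natCast_atTop_atTop).eventually_ge_atTop 100
  have hregime : ∀ᶠ n in Filter.atTop, ExpansionRegime n (k n) (p n) (Real.log n) := by
    filter_upwards [hlog, hk, hub, hlb] with n using ExpansionRegime.of_le_div
  have hlim : Filter.Tendsto (fun n : ℕ => 1 - 6 / (n : ℝ)) Filter.atTop (nhds 1) := by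
    simpa using (tendsto_const_div_atTop_nhds_zero_nat (6 : ℝ)).const_sub 1
  refine tendsto_of_tendsto_of_tendsto_of_le_of_le' hlim tendsto_const_nhds ?_ ?_
  · filter_upwards [hregime] with n h using h.one_sub_le_ghProb_copNumber_le
  · filter_upwards [hregime] with n h using ghProb_le_one h.p_nonneg h.p_le_one

/-- whp the cop number of `G^k(n,p)` is at most `C √(n/k) log n`. -/
theorem whp_Gknp_cop_number (k : ℕ → ℕ) (p : ℕ → ℝ) (hp : ∀ n, 0 < p n)
    (hk : Filter.Tendsto (fun n => (k n : ℝ) / Real.log n) Filter.atTop Filter.atTop)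
    (hub : ∀ᶠ n in Filter.atTop,
      p n * (((n - 1).choose (k n - 1) : ℕ) : ℝ) ≤ (n : ℝ) / k n)
    (hlb : Filter.Tendsto
      (fun n => p n * (((n - 1).choose (k n - 1) : ℕ) : ℝ) / Real.log n ^ 3)
      Filter.atTop Filter.atTop) :
    ∃ C : ℝ, 0 < C ∧
      Filter.Tendsto
        (fun n => ghProb n (k n) (p n) (fun G =>
          (G.copNumber : ℝ) ≤ C * Real.sqrt ((n : ℝ) / k n) * Real.log n))
        Filter.atTop (nhds 1) :=
  let ⟨C, hC, hlim⟩ := whp_Gknp_cop_number_general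
  ⟨C, hC, hlim k p (hk.eventually_ge_atTop 100) hub (hlb.eventually_ge_atTop 100)⟩
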